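/- arXiv:2102.04041 — 2 statements merged into one kernel-verified Lean document; each statement's English description precedes it below -/
import Mathlib

section
/- Let H be a graph with chromatic number χ(H) = k+1 (k ≥ 1) that contains a color critical edge, i.e., an edge e with χ(H − e) = k. Then there exists a natural number n₀ such that for every n ≥ n₀, every H-free graph G on n vertices satisfies ρ(G) ≤ ρ(T_{n,k}), with equality if and only if G is isomorphic to the Turán graph T_{n,k}. -/
open SimpleGraph Finset

attribute [local instance] Classical.propDecidable

/-- The spectral radius (largest adjacency eigenvalue) of a graph on `Fin n`. -/
noncomputable def adjSpectralRadius {n : ℕ} (G : SimpleGraph (Fin n)) : ℝ :=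
  sSup (spectrum ℝ (G.adjMatrix ℝ))

/-- `G` contains a copy of `H` (a subgraph isomorphic to `H`). -/
def Contains {α β : Type*} (G : SimpleGraph α) (H : SimpleGraph β) : Prop :=
  ∃ f : β ↪ α, ∀ a b, H.Adj a b → G.Adj (f a) (f b)

/-- The book `B_s`: `s` triangles sharing a common edge, i.e. `K_{2,s}` plus the
edge inside the part of size two. -/
def book (s : ℕ) : SimpleGraph (Fin 2 ⊕ Fin s) :=
  SimpleGraph.fromRel (fun x _ => x.isLeft = true)

/-- The theta graph `θ_{r+1} = θ(1,2,r+1)`: vertices `0,…,r+1` form a path of length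
`r+1`, the edge `0 ~ (r+1)`, and vertex `r+2` is adjacent to `0` and `r+1`. -/
def theta (r : ℕ) : SimpleGraph (Fin (r + 3)) :=
  SimpleGraph.fromRel (fun x y =>
    (x.val + 1 = y.val ∧ y.val ≤ r + 1) ∨
    (x.val = 0 ∧ y.val = r + 1) ∨
    (x.val = r + 2 ∧ (y.val = 0 ∨ y.val = r + 1)))

/-- The number of edges of a graph. -/
noncomputable def edgeCount {V : Type*} (G : SimpleGraph V) : ℕ := G.edgeSet.ncard

/-- The number of ordered pairs `(a,b) ∈ s × t` with `a ~ b`.  For disjoint `s` and `t`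
this is the number `e(s,t)` of edges between `s` and `t`; for `s = t` it is `2·e(s)`. -/
noncomputable def ordPairs {V : Type*} (G : SimpleGraph V) (s t : Finset V) : ℕ :=
  ((s ×ˢ t).filter fun p => G.Adj p.1 p.2).card

/-- The number of edges inside a vertex subset `s`. -/
noncomputable def edgesIn {V : Type*} (G : SimpleGraph V) (s : Finset V) : ℕ :=
  (G.induce (s : Set V)).edgeSet.ncard

/-!
Colour classes of sizes `N₁, …, N_k` bound the spectral radius `ρ` through `∑ Nᵢ / (ρ + Nᵢ) ≥ 1`,
with equality exactly for complete multipartite graphs. The left side is largest for balanced class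
sizes, so the Turán graph is the unique optimum among `k`-colourable graphs.

A dense `H`-free graph `G` is `k`-colourable: a clique on `k + 1` vertices would contain an edge
with many common neighbours, and together with a blow-up of `K_k` found by the Erdős–Stone argument
this edge yields a copy of `H`, with the critical edge mapped to it. So `G` has no such clique, and
the Andrásfai–Erdős–Sós theorem applies.

An `H`-free graph that is not `k`-colourable therefore has a vertex of degree well below `ρ`, so
some vertex has small Perron weight, and deleting it raises the density `ρ / n` by at least a
constant times `1 / n`. As these increments form a divergent series, `ρ ≤ (1 - 1 / k) n` for all
large `n`, and the gain of a single further deletion makes `ρ` smaller than that of the Turán graph.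
-/

namespace SpectralTuran

universe u

/-! ### The spectral radius and Perron vectors -/

section Matrix

open Matrix

variable {m : Type*} [Fintype m] {A : Matrix m m ℝ}

theorem sSup_spectrum_mem [Nonempty m] (hA : A.IsHermitian) :
    sSup (spectrum ℝ A) ∈ spectrum ℝ A :=
  Set.Nonempty.csSup_mem ⟨_, hA.eigenvalues_mem_spectrum_real (Classical.arbitrary m)⟩
    A.finite_real_spectrum

theorem posSemidef_sSup_spectrum_smul_one_sub (hA : A.IsHermitian) :
    (sSup (spectrum ℝ A) • (1 : Matrix m m ℝ) - A).PosSemidef := by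
  refine posSemidef_iff_isHermitian_and_spectrum_nonneg.2
    ⟨(isHermitian_one.smul (IsSelfAdjoint.all _)).sub hA, fun a ha => ?_⟩
  rw [← Algebra.algebraMap_eq_smul_one, ← spectrum.singleton_sub_eq, Set.singleton_sub] at ha
  obtain ⟨b, hb, rfl⟩ := ha
  exact sub_nonneg.2 (le_csSup A.finite_real_spectrum.bddAbove hb)

theorem dotProduct_mulVec_le_sSup_spectrum (hA : A.IsHermitian) (x : m → ℝ) :
    x ⬝ᵥ A *ᵥ x ≤ sSup (spectrum ℝ A) * (x ⬝ᵥ x) := by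
  have h := (posSemidef_sSup_spectrum_smul_one_sub hA).dotProduct_mulVec_nonneg x
  simpa [sub_mulVec, smul_mulVec, dotProduct_sub] using h

theorem mulVec_eq_of_sSup_spectrum_le (hA : A.IsHermitian) {x : m → ℝ}
    (hx : sSup (spectrum ℝ A) * (x ⬝ᵥ x) ≤ x ⬝ᵥ A *ᵥ x) :
    A *ᵥ x = sSup (spectrum ℝ A) • x := by
  have h := (posSemidef_sSup_spectrum_smul_one_sub hA).dotProduct_mulVec_zero_iff x
  have hzero := h.1 <| by
    simpa [sub_mulVec, smul_mulVec, dotProduct_sub, sub_eq_zero] using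
      hx.antisymm (dotProduct_mulVec_le_sSup_spectrum hA x)
  simpa [sub_mulVec, smul_mulVec, sub_eq_zero, eq_comm] using hzero

theorem exists_nonneg_eigenvector [Nonempty m] (hA : A.IsHermitian) (hpos : ∀ i j, 0 ≤ A i j) :
    ∃ x : m → ℝ, 0 ≤ x ∧ x ⬝ᵥ x = 1 ∧ A *ᵥ x = sSup (spectrum ℝ A) • x := by
  obtain ⟨i, hi⟩ : ∃ i, hA.eigenvalues i = sSup (spectrum ℝ A) := by
    simpa only [hA.spectrum_real_eq_range_eigenvalues, Set.mem_range] using sSup_spectrum_mem hA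
  set z : m → ℝ := ⇑(hA.eigenvectorBasis i)
  have hz : z ⬝ᵥ z = 1 := by
    have := EuclideanSpace.real_norm_sq_eq (hA.eigenvectorBasis i)
    rw [hA.eigenvectorBasis.norm_eq_one, one_pow] at this
    simpa [dotProduct, sq] using this.symm
  have habs : |z| ⬝ᵥ |z| = 1 := by simpa [dotProduct] using hz
  -- Passing to absolute values does not decrease the Rayleigh quotient.
  refine ⟨|z|, abs_nonneg z, habs, mulVec_eq_of_sSup_spectrum_le hA ?_⟩
  calc sSup (spectrum ℝ A) * (|z| ⬝ᵥ |z|) = z ⬝ᵥ A *ᵥ z := by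
        rw [hA.mulVec_eigenvectorBasis i, hi, dotProduct_smul, hz, habs, smul_eq_mul]
    _ ≤ |z| ⬝ᵥ A *ᵥ |z| := by
        simp only [dotProduct, mulVec, mul_sum]
        refine sum_le_sum fun a _ => sum_le_sum fun b _ => ?_
        have := le_abs_self (z a * (A a b * z b))
        rwa [abs_mul, abs_mul, abs_of_nonneg (hpos a b)] at this

end Matrix

section Graph

variable {V W : Type*} [Fintype V] [Fintype W] {G : SimpleGraph V} {x : V → ℝ}

/-- The largest adjacency eigenvalue of a graph on an arbitrary finite vertex type;
`adjSpectralRadius` is the case of `Fin n`. Allowing other vertex types lets one delete a vertex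
without relabelling the remaining ones. -/
noncomputable def specRadius (G : SimpleGraph V) : ℝ :=
  sSup (spectrum ℝ (G.adjMatrix ℝ))

/-- A nonnegative eigenvector of `G` for its spectral radius, of Euclidean norm `1`; the eigenvalue
equation is stated vertex by vertex. -/
structure IsPerronVector (G : SimpleGraph V) (x : V → ℝ) : Prop where
  nonneg : ∀ v, 0 ≤ x v
  sum_sq : ∑ v, x v ^ 2 = 1
  sum_neighborFinset : ∀ v, ∑ w ∈ G.neighborFinset v, x w = specRadius G * x v

theorem specRadius_congr {G' : SimpleGraph W} (φ : G ≃g G') : specRadius G = specRadius G' := by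
  have h : Matrix.reindexAlgEquiv ℝ ℝ φ.toEquiv (G.adjMatrix ℝ) = G'.adjMatrix ℝ :=
    φ.reindex_adjMatrix ℝ
  rw [specRadius, specRadius, ← h, AlgEquiv.spectrum_eq]

theorem sum_mul_sum_neighborFinset_le (G : SimpleGraph V) (x : V → ℝ) :
    ∑ v, x v * ∑ w ∈ G.neighborFinset v, x w ≤ specRadius G * ∑ v, x v ^ 2 := by
  simpa [dotProduct, sq, specRadius] using
    dotProduct_mulVec_le_sSup_spectrum (G.isHermitian_adjMatrix ℝ) x

theorem sum_degree_eq_two_mul_card_edgeFinset (G : SimpleGraph V) [Fintype G.edgeSet] :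
    ∑ v, (G.degree v : ℝ) = 2 * #G.edgeFinset := by
  rw [← Nat.cast_sum, G.sum_degrees_eq_twice_card_edges, Nat.cast_mul, Nat.cast_two]
  congr!

theorem two_mul_card_edgeFinset_le (G : SimpleGraph V) [Fintype G.edgeSet] :
    2 * (#G.edgeFinset : ℝ) ≤ specRadius G * Fintype.card V := by
  have h := sum_mul_sum_neighborFinset_le G 1
  simpa [sum_degree_eq_two_mul_card_edgeFinset] using h

theorem exists_isPerronVector [Nonempty V] (G : SimpleGraph V) : ∃ x, IsPerronVector G x := by
  obtain ⟨x, hx, hsq, heig⟩ := exists_nonneg_eigenvector (G.isHermitian_adjMatrix ℝ)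
    fun v w => by rw [adjMatrix_apply]; split_ifs <;> norm_num
  exact ⟨x, hx, by simpa [dotProduct, sq] using hsq, fun v => by
    simpa [specRadius] using congrFun heig v⟩

theorem IsPerronVector.sum_pos (hx : IsPerronVector G x) : 0 < ∑ v, x v := by
  refine (sum_nonneg fun v _ => hx.nonneg v).lt_of_ne fun h => ?_
  obtain rfl : x = 0 := by
    simpa [funext_iff] using (sum_eq_zero_iff_of_nonneg fun v _ => hx.nonneg v).1 h.symm
  simpa using hx.sum_sq

theorem specRadius_nonneg (G : SimpleGraph V) : 0 ≤ specRadius G := by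
  cases isEmpty_or_nonempty V
  · simp [specRadius]
  · have h := (mul_nonneg zero_le_two (Nat.cast_nonneg _)).trans (two_mul_card_edgeFinset_le G)
    exact nonneg_of_mul_nonneg_left h (Nat.cast_pos.2 Fintype.card_pos)

end Graph

/-! ### Coloured graphs -/

section Coloring

variable {V ι : Type*} [Fintype V] {G : SimpleGraph V} {x : V → ℝ}

/-- The number of vertices receiving the colour `i`, for colourings that need not be proper. -/
noncomputable def classSize (c : V → ι) (i : ι) : ℕ := #{v | c v = i}

/-- The sum `∑ Nᵢ / (l + Nᵢ)`. A complete multipartite graph with parts of sizes `Nᵢ` has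
characteristic polynomial `(1 - partitionSum N l) * ∏ (l + Nᵢ)`, up to a power of `l`, so that
its spectral radius is the positive root of `partitionSum N l = 1`. -/
noncomputable def partitionSum [Fintype ι] (N : ι → ℕ) (l : ℝ) : ℝ := ∑ i, (N i : ℝ) / (l + N i)

/-- The total `x`-weight of the non-neighbours of `v` whose colour differs from that of `v`;
it measures how far `G` is from the complete multipartite graph on its colour classes. -/
noncomputable def defect (G : SimpleGraph V) (c : V → ι) (x : V → ℝ) (v : V) : ℝ :=
  ∑ w with c w ≠ c v ∧ ¬ G.Adj v w, x w

theorem classSize_pos (c : V → ι) (v : V) : 0 < classSize c (c v) :=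
  card_pos.2 ⟨v, by simp⟩

theorem IsPerronVector.defect_nonneg (hx : IsPerronVector G x) (c : V → ι) (v : V) :
    0 ≤ defect G c x v :=
  sum_nonneg fun w _ => hx.nonneg w

theorem IsPerronVector.specRadius_mul_add_add_defect (hx : IsPerronVector G x) (C : G.Coloring ι)
    (v : V) :
    specRadius G * x v + ∑ w with C w = C v, x w + defect G C x v = ∑ w, x w := by
  have hsplit : ({w | C w ≠ C v} : Finset V).filter (G.Adj v) = G.neighborFinset v := by
    ext w
    simpa using fun h => (C.valid h).symm
  rw [← hx.sum_neighborFinset v, ← hsplit, defect, ← filter_filter, add_right_comm,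
    sum_filter_add_sum_filter_not, add_comm, sum_filter_add_sum_filter_not]

variable [Fintype ι]

theorem sum_comp_eq_sum_classSize_mul (c : V → ι) (f : ι → ℝ) :
    ∑ v, f (c v) = ∑ i, classSize c i * f i := by
  rw [← sum_fiberwise univ c]
  refine sum_congr rfl fun i _ => ?_
  rw [sum_congr rfl fun v hv => by rw [(mem_filter.1 hv).2], sum_const, nsmul_eq_mul, classSize]

theorem sum_classSize (c : V → ι) : ∑ i, classSize c i = Fintype.card V :=
  (card_eq_sum_card_fiberwise fun _ _ => mem_univ _).symm

theorem partitionSum_classSize (c : V → ι) (l : ℝ) :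
    partitionSum (classSize c) l = ∑ v, 1 / (l + classSize c (c v)) := by
  rw [sum_comp_eq_sum_classSize_mul c fun i => 1 / (l + classSize c i)]
  exact sum_congr rfl fun i _ => by rw [mul_one_div]

theorem partitionSum_lt_partitionSum {N : ι → ℕ} (hN : ∃ i, 0 < N i) {a b : ℝ} (ha : 0 ≤ a)
    (hab : a < b) : partitionSum N b < partitionSum N a := by
  have hlt (i : ι) (hi : 0 < N i) : (N i : ℝ) / (b + N i) < N i / (a + N i) := by
    have : (0 : ℝ) < N i := Nat.cast_pos.2 hi
    gcongr
  obtain ⟨i, hi⟩ := hN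
  refine sum_lt_sum (fun j _ => ?_) ⟨i, mem_univ i, hlt i hi⟩
  rcases (N j).eq_zero_or_pos with hj | hj
  · simp [hj]
  · exact (hlt j hj).le

namespace IsPerronVector

theorem sum_mul_partitionSum_sub_one (hx : IsPerronVector G x) (C : G.Coloring ι) :
    (∑ v, x v) * (partitionSum (classSize C) (specRadius G) - 1) =
      ∑ v, defect G C x v / (specRadius G + classSize C (C v)) := by
  set ρ := specRadius G
  set N := classSize C
  have hpos (v : V) : 0 < ρ + N (C v) :=
    add_pos_of_nonneg_of_pos (specRadius_nonneg G) (Nat.cast_pos.2 (classSize_pos C v))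
  have hclass : ∑ v, (∑ w with C w = C v, x w) / (ρ + N (C v)) =
      ∑ w, N (C w) * x w / (ρ + N (C w)) := by
    simp only [sum_div, sum_filter]
    rw [sum_comm]
    refine sum_congr rfl fun w _ => ?_
    simp only [ite_div, zero_div]
    rw [← sum_filter, sum_congr rfl fun v hv => by rw [← (mem_filter.1 hv).2], sum_const,
      nsmul_eq_mul, mul_div_assoc]
    simp only [N, classSize, eq_comm]
  have hsum : ∑ v, x v = ∑ v, (ρ * x v + ∑ w with C w = C v, x w) / (ρ + N (C v)) := by
    simp only [add_div]
    rw [sum_add_distrib, hclass, ← sum_add_distrib]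
    exact sum_congr rfl fun v _ => by rw [← add_div, ← add_mul, mul_div_cancel_left₀ _ (hpos v).ne']
  have hdefect (v : V) : defect G C x v / (ρ + N (C v)) = (∑ w, x w) * (1 / (ρ + N (C v))) -
      (ρ * x v + ∑ w with C w = C v, x w) / (ρ + N (C v)) := by
    rw [← hx.specRadius_mul_add_add_defect C v]
    ring
  simp only [hdefect]
  rw [sum_sub_distrib, ← mul_sum, ← partitionSum_classSize, ← hsum, mul_sub_one]

theorem one_le_partitionSum (hx : IsPerronVector G x) (C : G.Coloring ι) :
    1 ≤ partitionSum (classSize C) (specRadius G) := by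
  have h : 0 ≤ (∑ v, x v) * (partitionSum (classSize C) (specRadius G) - 1) := by
    rw [hx.sum_mul_partitionSum_sub_one C]
    exact sum_nonneg fun v _ => div_nonneg (hx.defect_nonneg C v)
      (add_nonneg (specRadius_nonneg G) (Nat.cast_nonneg _))
  exact sub_nonneg.1 (nonneg_of_mul_nonneg_right h hx.sum_pos)

theorem partitionSum_eq_one (hx : IsPerronVector G x) (C : G.Coloring ι)
    (hC : ∀ v w, C v ≠ C w → G.Adj v w) : partitionSum (classSize C) (specRadius G) = 1 := by
  have hdefect (v : V) : defect G C x v = 0 := by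
    rw [defect, filter_eq_empty_iff.2 fun w _ h => h.2 (hC v w h.1.symm), sum_empty]
  have h := hx.sum_mul_partitionSum_sub_one C
  simp only [hdefect, zero_div, sum_const_zero] at h
  exact sub_eq_zero.1 ((mul_eq_zero.1 h).resolve_left hx.sum_pos.ne')

theorem adj_of_partitionSum_eq_one (hx : IsPerronVector G x) (C : G.Coloring ι)
    (hone : partitionSum (classSize C) (specRadius G) = 1) {v w : V} (hvw : C v ≠ C w) :
    G.Adj v w := by
  have hdefect (u : V) : defect G C x u = 0 := by
    have h := hx.sum_mul_partitionSum_sub_one C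
    have hpos (u : V) : 0 < specRadius G + classSize C (C u) :=
      add_pos_of_nonneg_of_pos (specRadius_nonneg G) (Nat.cast_pos.2 (classSize_pos C u))
    rw [hone, sub_self, mul_zero, eq_comm, sum_eq_zero_iff_of_nonneg fun u _ =>
      div_nonneg (hx.defect_nonneg C u) (hpos u).le] at h
    exact (div_eq_zero_iff.1 (h u (mem_univ u))).resolve_right (hpos u).ne'
  by_contra hadj
  -- A missing edge `vw` forces `x v = x w = 0`, hence the classes of both `v` and `w` would
  -- carry the whole weight.
  have hzero {a b : V} (hab : C a ≠ C b) (hn : ¬ G.Adj b a) : x a = 0 :=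
    (sum_eq_zero_iff_of_nonneg fun u _ => hx.nonneg u).1 (hdefect b) a (by simp [hab, hn])
  have hclass {a : V} (ha : x a = 0) : ∑ u with C u = C a, x u = ∑ u, x u := by
    simpa [ha, hdefect a] using hx.specRadius_mul_add_add_defect C a
  have hv := hclass (hzero hvw fun h => hadj h.symm)
  have hw := hclass (hzero hvw.symm hadj)
  have hdisj : Disjoint ({u | C u = C v} : Finset V) ({u | C u = C w} : Finset V) :=
    disjoint_filter.2 fun u _ h h' => hvw (h.symm.trans h')
  have hle : ∑ u with C u = C v, x u + ∑ u with C u = C w, x u ≤ ∑ u, x u := by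
    rw [← sum_union hdisj]
    exact sum_le_sum_of_subset_of_nonneg (subset_univ _) fun u _ _ => hx.nonneg u
  linarith [hx.sum_pos]

end IsPerronVector

end Coloring

/-! ### Balanced partitions and the Turán graph -/

section Balanced

variable {ι : Type*} {N t : ι → ℕ} {q : ℕ} {l : ℝ}

/-- All values of `N` are `q` or `q + 1`, like the part sizes of a Turán graph. -/
def IsBalanced (q : ℕ) (N : ι → ℕ) : Prop := ∀ i, N i = q ∨ N i = q + 1

/-- The affine function that agrees with `f` at `q` and at `q + 1`. Its sum over a family depends
only on the total of the family, which makes it the benchmark for balanced families. -/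
noncomputable def secant (f : ℕ → ℝ) (q m : ℕ) : ℝ := f q + (m - q) * (f (q + 1) - f q)

theorem IsBalanced.secant_eq (hN : IsBalanced q N) (f : ℕ → ℝ) (i : ι) :
    secant f q (N i) = f (N i) := by
  rcases hN i with h | h <;> simp [secant, h]

variable [Fintype ι]

theorem sum_secant_congr (f : ℕ → ℝ) (q : ℕ) (hsum : ∑ i, N i = ∑ i, t i) :
    ∑ i, secant f q (N i) = ∑ i, secant f q (t i) := by
  have hsum' : ∑ i, (N i : ℝ) = ∑ i, (t i : ℝ) := by exact_mod_cast hsum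
  simp only [secant, sum_add_distrib, ← sum_mul, sum_sub_distrib, hsum']

theorem IsBalanced.sum_congr (hN : IsBalanced q N) (ht : IsBalanced q t)
    (hsum : ∑ i, N i = ∑ i, t i) (f : ℕ → ℝ) : ∑ i, f (N i) = ∑ i, f (t i) := by
  simpa only [hN.secant_eq, ht.secant_eq] using sum_secant_congr f q hsum

theorem secant_sub_div_add (hl : 0 < l) (q m : ℕ) :
    secant (fun j => (j : ℝ) / (l + j)) q m - m / (l + m) =
      l * (((m : ℝ) - q) * (m - q - 1)) / ((l + m) * (l + q) * (l + q + 1)) := by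
  have h (j : ℕ) : l + (j : ℝ) ≠ 0 := by positivity
  have hm := h m
  have hq := h q
  have hq' := h (q + 1)
  simp only [secant]
  push_cast at hq' ⊢
  rw [← add_assoc] at hq' ⊢
  field_simp
  ring

theorem mul_sub_one_nonneg_of_nat (q m : ℕ) : 0 ≤ ((m : ℝ) - q) * (m - q - 1) := by
  have h := Int.le_self_sq ((m : ℤ) - q)
  have h' : (0 : ℤ) ≤ (m - q) * (m - q - 1) := by linarith
  exact_mod_cast h'

theorem div_add_le_secant (hl : 0 < l) (q m : ℕ) :
    (m : ℝ) / (l + m) ≤ secant (fun j => (j : ℝ) / (l + j)) q m := by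
  rw [← sub_nonneg, secant_sub_div_add hl]
  have := mul_sub_one_nonneg_of_nat q m
  positivity

theorem eq_or_eq_of_secant_eq (hl : 0 < l) {q m : ℕ}
    (h : (m : ℝ) / (l + m) = secant (fun j => (j : ℝ) / (l + j)) q m) : m = q ∨ m = q + 1 := by
  have hzero := secant_sub_div_add hl q m
  rw [h, sub_self, eq_comm, div_eq_zero_iff, or_iff_left (by positivity), mul_eq_zero,
    or_iff_right hl.ne', mul_eq_zero, sub_eq_zero, sub_sub, sub_eq_zero] at hzero
  exact_mod_cast hzero

theorem IsBalanced.sum_secant_eq_partitionSum (ht : IsBalanced q t)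
    (hsum : ∑ i, N i = ∑ i, t i) (l : ℝ) :
    ∑ i, secant (fun j => (j : ℝ) / (l + j)) q (N i) = partitionSum t l := by
  simp only [sum_secant_congr _ q hsum, ht.secant_eq, partitionSum]

theorem IsBalanced.partitionSum_le (ht : IsBalanced q t) (hsum : ∑ i, N i = ∑ i, t i)
    (hl : 0 < l) : partitionSum N l ≤ partitionSum t l := by
  rw [← ht.sum_secant_eq_partitionSum hsum]
  exact sum_le_sum fun i _ => div_add_le_secant hl q (N i)

theorem IsBalanced.of_partitionSum_eq (ht : IsBalanced q t) (hsum : ∑ i, N i = ∑ i, t i)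
    (hl : 0 < l) (h : partitionSum N l = partitionSum t l) : IsBalanced q N := by
  rw [← ht.sum_secant_eq_partitionSum hsum] at h
  exact fun i => eq_or_eq_of_secant_eq hl <|
    (sum_eq_sum_iff_of_le fun i _ => div_add_le_secant hl q (N i)).1 h i (mem_univ i)

theorem partitionSum_le_div (hl : 0 < l) (N : ι → ℕ) :
    partitionSum N l ≤ (∑ i, N i) / (l + (∑ i, N i) / Fintype.card ι) := by
  cases isEmpty_or_nonempty ι
  · simp [partitionSum]
  set m : ℝ := (∑ i, N i) / Fintype.card ι
  have hcard : (0 : ℝ) < Fintype.card ι := Nat.cast_pos.2 Fintype.card_pos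
  have hm : 0 ≤ m := by positivity
  have htangent (i : ι) : (N i : ℝ) / (l + N i) ≤ m / (l + m) + l / (l + m) ^ 2 * (N i - m) := by
    have : m / (l + m) + l / (l + m) ^ 2 * (N i - m) - N i / (l + N i) =
        l * (N i - m) ^ 2 / ((l + m) ^ 2 * (l + N i)) := by
      field_simp
      ring
    rw [← sub_nonneg, this]
    positivity
  have hsum : ∑ i, ((N i : ℝ) - m) = 0 := by
    simp [m, mul_div_cancel₀ _ hcard.ne']
  calc partitionSum N l ≤ ∑ i, (m / (l + m) + l / (l + m) ^ 2 * (N i - m)) :=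
        sum_le_sum fun i _ => htangent i
    _ = (∑ i, N i) / (l + m) := by
        rw [sum_add_distrib, ← mul_sum, hsum, mul_zero, add_zero, sum_const, card_univ,
          nsmul_eq_mul, ← mul_div_assoc, mul_div_cancel₀ _ hcard.ne']

end Balanced

section Turan

variable {V ι : Type*} [Fintype V] [Fintype ι] {G : SimpleGraph V} {n k : ℕ}

theorem specRadius_le_of_coloring (C : G.Coloring ι) :
    specRadius G ≤ (1 - 1 / Fintype.card ι) * Fintype.card V := by
  cases isEmpty_or_nonempty V
  · simp [specRadius]
  have hι : Nonempty ι := ‹Nonempty V›.map C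
  have hcard : (1 : ℝ) ≤ Fintype.card ι := Nat.one_le_cast.2 Fintype.card_pos
  rcases (specRadius_nonneg G).eq_or_lt with h | hpos
  · rw [← h]
    exact mul_nonneg (sub_nonneg.2 ((div_le_one₀ (by linarith)).2 hcard)) (Nat.cast_nonneg _)
  obtain ⟨x, hx⟩ := exists_isPerronVector G
  have hle := (hx.one_le_partitionSum C).trans (partitionSum_le_div hpos _)
  rw [sum_classSize, one_le_div₀ (by positivity)] at hle
  calc specRadius G ≤ Fintype.card V - Fintype.card V / Fintype.card ι := by linarith
    _ = (1 - 1 / Fintype.card ι) * Fintype.card V := by ring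

theorem specRadius_le_card (G : SimpleGraph V) : specRadius G ≤ Fintype.card V :=
  (specRadius_le_of_coloring G.selfColoring).trans <|
    mul_le_of_le_one_left (Nat.cast_nonneg _) (sub_le_self _ (by positivity))

theorem two_mul_card_edgeFinset_eq [Fintype G.edgeSet] (C : G.Coloring ι)
    (hC : ∀ v w, C v ≠ C w → G.Adj v w) :
    2 * (#G.edgeFinset : ℝ) = ∑ i, classSize C i * ((Fintype.card V : ℝ) - classSize C i) := by
  have hdeg (v : V) : (G.degree v : ℝ) = Fintype.card V - classSize C (C v) := by
    have hN : G.neighborFinset v = ({w | C w = C v} : Finset V)ᶜ := by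
      ext w
      simpa using ⟨fun h => (C.valid h).symm, fun h => hC v w (Ne.symm h)⟩
    rw [degree, hN, card_compl, Nat.cast_sub (card_le_univ _), classSize]
  rw [← sum_comp_eq_sum_classSize_mul C fun i => (Fintype.card V : ℝ) - classSize C i,
    ← sum_degree_eq_two_mul_card_edgeFinset]
  simp only [hdeg]

theorem exists_turanGraph_coloring (hk : 0 < k) (n : ℕ) :
    ∃ C : (turanGraph n k).Coloring (Fin k),
      (∀ v w, C v ≠ C w → (turanGraph n k).Adj v w) ∧ IsBalanced (n / k) (classSize C) := by
  let c (v : Fin n) : Fin k := ⟨v % k, Nat.mod_lt _ hk⟩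
  have hadj (v w : Fin n) : (turanGraph n k).Adj v w ↔ c v ≠ c w := by
    rw [turanGraph_adj, Ne, Ne, Fin.ext_iff]
  refine ⟨Coloring.mk c fun {v w} => (hadj v w).1, fun v w => (hadj v w).2, fun i => ?_⟩
  have hcount : classSize c i = n.count (· ≡ i.val [MOD k]) := by
    rw [classSize, Nat.count_eq_card_filter_range, ← Nat.Iio_eq_range,
      ← Fin.map_valEmbedding_univ, filter_map, card_map]
    congr 1
    ext v
    simp [c, Fin.ext_iff, Nat.ModEq, Nat.mod_eq_of_lt i.2]
  change classSize c i = _ ∨ classSize c i = _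
  rw [hcount, Nat.count_modEq_card n hk]
  split_ifs
  · exact .inr rfl
  · exact .inl rfl

theorem le_specRadius_turanGraph_mul (hk : 0 < k) (n : ℕ) :
    (1 - 1 / k) * n ^ 2 - (k ^ 2 + 2) ≤ specRadius (turanGraph n k) * n := by
  have hk' : (0 : ℝ) < k := Nat.cast_pos.2 hk
  have hedges : (n ^ 2 - (n % k) ^ 2) * (k - 1) < (#(turanGraph n k).edgeFinset + 1) * (2 * k) := by
    rw [card_edgeFinset_turanGraph, ← Nat.div_lt_iff_lt_mul (by omega)]
    omega
  have hcast : ((n : ℝ) ^ 2 - (n % k : ℕ) ^ 2) * (k - 1) <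
      (#(turanGraph n k).edgeFinset + 1) * (2 * k) := by
    have h := (Nat.cast_lt (α := ℝ)).2 hedges
    push_cast [hk, Nat.pow_le_pow_left (Nat.mod_le n k) 2, Nat.cast_sub] at h
    exact_mod_cast h
  have hmod : ((n % k : ℕ) : ℝ) ^ 2 * (k - 1) ≤ k ^ 2 * k := by
    have : ((n % k : ℕ) : ℝ) ≤ k := Nat.cast_le.2 (Nat.mod_lt n hk).le
    have : (1 : ℝ) ≤ k := Nat.one_le_cast.2 hk
    gcongr
    linarith
  have hρ := two_mul_card_edgeFinset_le (turanGraph n k)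
  rw [Fintype.card_fin] at hρ
  rw [one_sub_div hk'.ne', div_mul_eq_mul_div, sub_le_iff_le_add, div_le_iff₀ hk']
  linarith [mul_le_mul_of_nonneg_right hρ hk'.le]

theorem nonempty_iso_turanGraph_of_card_edgeFinset {G : SimpleGraph (Fin n)} (hk : 0 < k)
    (hG : G.Colorable k) (hcard : #G.edgeFinset = #(turanGraph n k).edgeFinset) :
    Nonempty (G ≃g turanGraph n k) := by
  have hmax : G.IsTuranMaximal k := by
    refine ⟨hG.cliqueFree k.lt_succ_self, fun G' _ hG' => ?_⟩
    rw [hcard]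
    convert! (isTuranMaximal_turanGraph hk).2 hG'
  have := (isTuranMaximal_iff_nonempty_iso_turanGraph hk).1 hmax
  rwa [Fintype.card_fin] at this

theorem specRadius_le_turanGraph {G : SimpleGraph (Fin n)} (hk : 0 < k) (hG : G.Colorable k) :
    specRadius G ≤ specRadius (turanGraph n k) := by
  by_contra! hlt
  have hpos := (specRadius_nonneg _).trans_lt hlt
  have hn : Nonempty (Fin n) := by
    by_contra! h
    exact hpos.not_ge (by simpa using specRadius_le_card G)
  obtain ⟨C⟩ := hG
  obtain ⟨C₀, hC₀, hbal⟩ := exists_turanGraph_coloring hk n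
  obtain ⟨x, hx⟩ := exists_isPerronVector G
  obtain ⟨y, hy⟩ := exists_isPerronVector (turanGraph n k)
  have hsum : ∑ i, classSize C i = ∑ i, classSize C₀ i := by rw [sum_classSize, sum_classSize]
  have h := calc
    1 ≤ partitionSum (classSize C) (specRadius G) := hx.one_le_partitionSum C
    _ ≤ partitionSum (classSize C₀) (specRadius G) := hbal.partitionSum_le hsum hpos
    _ < partitionSum (classSize C₀) (specRadius (turanGraph n k)) :=
        partitionSum_lt_partitionSum ⟨_, classSize_pos C₀ hn.some⟩ (specRadius_nonneg _) hlt
    _ = 1 := hy.partitionSum_eq_one C₀ hC₀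
  exact h.false

theorem nonempty_iso_turanGraph_of_specRadius_eq {G : SimpleGraph (Fin n)} (hk : 0 < k)
    (hG : G.Colorable k) (h : specRadius G = specRadius (turanGraph n k)) :
    Nonempty (G ≃g turanGraph n k) := by
  refine nonempty_iso_turanGraph_of_card_edgeFinset hk hG ?_
  rcases (specRadius_nonneg G).eq_or_lt with hzero | hpos
  · have hempty {G' : SimpleGraph (Fin n)} [Fintype G'.edgeSet] (h : specRadius G' = 0) :
        #G'.edgeFinset = 0 := by
      have := two_mul_card_edgeFinset_le G'
      rw [h, zero_mul] at this
      exact_mod_cast le_antisymm (by linarith) (Nat.cast_nonneg (α := ℝ) _)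
    exact (hempty hzero.symm).trans (hempty (h ▸ hzero.symm)).symm
  have hn : Nonempty (Fin n) := by
    by_contra! h
    exact hpos.not_ge (by simpa using specRadius_le_card G)
  obtain ⟨C⟩ := hG
  obtain ⟨C₀, hC₀, hbal⟩ := exists_turanGraph_coloring hk n
  obtain ⟨x, hx⟩ := exists_isPerronVector G
  obtain ⟨y, hy⟩ := exists_isPerronVector (turanGraph n k)
  have hsum : ∑ i, classSize C i = ∑ i, classSize C₀ i := by rw [sum_classSize, sum_classSize]
  have hone₀ : partitionSum (classSize C₀) (specRadius G) = 1 :=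
    h ▸ hy.partitionSum_eq_one C₀ hC₀
  have hone : partitionSum (classSize C) (specRadius G) = 1 :=
    (hone₀ ▸ hbal.partitionSum_le hsum hpos).antisymm (hx.one_le_partitionSum C)
  have hcomplete (v w : Fin n) : C v ≠ C w → G.Adj v w := hx.adj_of_partitionSum_eq_one C hone
  have hbal' : IsBalanced (n / k) (classSize C) :=
    hbal.of_partitionSum_eq hsum hpos (hone.trans hone₀.symm)
  have hedges : 2 * (#G.edgeFinset : ℝ) = 2 * #(turanGraph n k).edgeFinset := by
    rw [two_mul_card_edgeFinset_eq C hcomplete, two_mul_card_edgeFinset_eq C₀ hC₀]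
    exact hbal'.sum_congr hbal hsum fun m => m * ((Fintype.card (Fin n) : ℝ) - m)
  exact_mod_cast mul_left_cancel₀ two_ne_zero hedges

end Turan

/-! ### Deleting a vertex -/

section DeleteVertex

variable {V : Type*}

/-- The graph `G - u`, on the subtype of vertices other than `u`. -/
abbrev deleteVertex (G : SimpleGraph V) (u : V) : SimpleGraph {v // v ≠ u} :=
  G.comap Subtype.val

theorem free_deleteVertex {α : Type*} {H : SimpleGraph α} {G : SimpleGraph V} (hG : H.Free G)
    (u : V) : H.Free (deleteVertex G u) :=
  fun h => hG (h.trans ⟨(Embedding.comap (Function.Embedding.subtype _) G).toCopy⟩)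

variable [Fintype V] {G : SimpleGraph V} {x : V → ℝ}

theorem card_subtype_ne (u : V) : Fintype.card {v // v ≠ u} + 1 = Fintype.card V := by
  rw [Fintype.card_subtype_compl, Fintype.card_subtype_eq]
  exact Nat.sub_add_cancel (Fintype.card_pos_iff.2 ⟨u⟩)

theorem sum_neighborFinset_deleteVertex (G : SimpleGraph V) (x : V → ℝ) {u : V}
    (v : {v // v ≠ u}) :
    ∑ w ∈ (deleteVertex G u).neighborFinset v, x w =
      ∑ w ∈ G.neighborFinset v, x w - if G.Adj u v then x u else 0 := by
  simp only [neighborFinset_eq_filter, sum_filter, comap_adj]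
  rw [Fintype.sum_eq_add_sum_subtype_ne _ u, G.adj_comm v u, add_sub_cancel_left]

theorem IsPerronVector.mul_one_sub_two_mul_sq_le (hx : IsPerronVector G x) (u : V) :
    specRadius G * (1 - 2 * x u ^ 2) ≤ specRadius (deleteVertex G u) * (1 - x u ^ 2) := by
  have hu : ∑ v : {v // v ≠ u}, x v * (if G.Adj u v then x u else 0) =
      specRadius G * x u ^ 2 := by
    have h := Fintype.sum_eq_add_sum_subtype_ne (fun v => x v * if G.Adj u v then x u else 0) u
    rw [if_neg G.irrefl, mul_zero, zero_add] at h
    rw [← h, sq, ← mul_assoc, ← hx.sum_neighborFinset u, neighborFinset_eq_filter, sum_filter,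
      sum_mul]
    exact sum_congr rfl fun v _ => by split_ifs <;> simp
  have hsq : ∑ v : {v // v ≠ u}, x v ^ 2 = 1 - x u ^ 2 := by
    rw [← hx.sum_sq, Fintype.sum_eq_add_sum_subtype_ne _ u, add_sub_cancel_left]
  calc specRadius G * (1 - 2 * x u ^ 2) =
        ∑ v : {v // v ≠ u}, x v * ∑ w ∈ (deleteVertex G u).neighborFinset v, x w := by
        simp only [sum_neighborFinset_deleteVertex, hx.sum_neighborFinset, mul_sub]
        rw [sum_sub_distrib, hu]
        have : ∑ v : {v // v ≠ u}, x v * (specRadius G * x v) = specRadius G * (1 - x u ^ 2) := by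
          rw [← hsq, mul_sum]
          exact sum_congr rfl fun v _ => by ring
        rw [this]
        ring
    _ ≤ specRadius (deleteVertex G u) * (1 - x u ^ 2) := by
        rw [← hsq]
        exact sum_mul_sum_neighborFinset_le _ _

theorem IsPerronVector.sq_mul_le_degree (hx : IsPerronVector G x) {s : ℝ}
    (hs : ∀ v, s ≤ x v ^ 2) (v : V) :
    s * (specRadius G ^ 2 + G.degree v * (Fintype.card V - G.degree v)) ≤ G.degree v := by
  have hcauchy : (specRadius G * x v) ^ 2 ≤ G.degree v * ∑ w ∈ G.neighborFinset v, x w ^ 2 := by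
    rw [← hx.sum_neighborFinset v]
    exact sq_sum_le_card_mul_sum_sq
  have hcompl : (Fintype.card V - G.degree v) * s ≤ ∑ w ∈ (G.neighborFinset v)ᶜ, x w ^ 2 := by
    have h := card_nsmul_le_sum (G.neighborFinset v)ᶜ (fun w => x w ^ 2) s fun w _ => hs w
    rwa [nsmul_eq_mul, card_compl, Nat.cast_sub (card_le_univ _)] at h
  have hsum := hx.sum_sq
  rw [← sum_add_sum_compl (G.neighborFinset v)] at hsum
  nlinarith [mul_le_mul_of_nonneg_left (hs v) (sq_nonneg (specRadius G)),
    mul_le_mul_of_nonneg_left hcompl (Nat.cast_nonneg (α := ℝ) (G.degree v))]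

theorem le_one_sub_of_mul_le {a b e σ : ℝ} (hb : 0 ≤ b) (hba : b ≤ a - e) (ha : a ≤ 1)
    (he : 0 < e) (hσ : 0 ≤ σ) (h : σ * (a ^ 2 + b * (1 - b)) ≤ b) : σ ≤ 1 - e := by
  have hea : 0 < e * a := by nlinarith
  have hle : b + e * a ≤ a ^ 2 + b * (1 - b) := by nlinarith
  have hb' : b ≤ (1 - e) * (b + e * a) := by
    nlinarith [mul_nonneg he.le (sub_nonneg.2 hba), mul_nonneg (sq_nonneg e) (sub_nonneg.2 ha)]
  refine le_of_mul_le_mul_right ?_ (add_pos_of_nonneg_of_pos hb hea)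
  exact (mul_le_mul_of_nonneg_left hle hσ).trans (h.trans hb')

-- A vertex of degree well below `specRadius G` has small Perron weight, so that the vertex of
-- smallest weight contributes to the spectral radius less than its share.
theorem exists_le_specRadius_deleteVertex (G : SimpleGraph V) {e : ℝ} (he : 0 < e)
    (hcard : 2 ≤ e * Fintype.card V) {v : V}
    (hv : G.degree v ≤ specRadius G - e * Fintype.card V) :
    ∃ u, specRadius G / Fintype.card V * (Fintype.card V - 1 + e / 2) ≤
      specRadius (deleteVertex G u) := by
  have : Nonempty V := ⟨v⟩
  obtain ⟨x, hx⟩ := exists_isPerronVector G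
  obtain ⟨u, hu⟩ := Finite.exists_min fun v => x v ^ 2
  have hdel := hx.mul_one_sub_two_mul_sq_le u
  have hdeg := hx.sq_mul_le_degree hu v
  have hle := specRadius_le_card G
  have hn : (0 : ℝ) < Fintype.card V := Nat.cast_pos.2 Fintype.card_pos
  set n := (Fintype.card V : ℝ)
  set d := (G.degree v : ℝ)
  set ρ := specRadius G
  set s := x u ^ 2
  have hd : 0 ≤ d := Nat.cast_nonneg _
  have hs : 0 ≤ s := sq_nonneg _
  have hρ : 0 < ρ := by linarith
  have hsn : s * n ≤ 1 - e := by
    refine le_one_sub_of_mul_le (a := ρ / n) (b := d / n) (by positivity) ?_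
      ((div_le_one₀ hn).2 hle) he (by positivity) ?_
    · rwa [le_sub_iff_add_le, div_add' _ _ _ hn.ne', div_le_div_iff_of_pos_right hn,
        ← le_sub_iff_add_le]
    · rw [le_div_iff₀ hn]
      refine le_of_eq_of_le ?_ hdeg
      field_simp
  have hse : s ≤ e / 2 := by
    refine le_of_mul_le_mul_right ?_ hn
    linarith
  have he1 : e ≤ 1 := le_of_mul_le_mul_right (by linarith) hn
  have hratio : (n - 1 + e / 2) * (1 - s) ≤ n * (1 - 2 * s) := by nlinarith
  refine ⟨u, le_of_mul_le_mul_right ?_ (show 0 < 1 - s by linarith)⟩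
  calc ρ / n * (n - 1 + e / 2) * (1 - s) ≤ ρ / n * (n * (1 - 2 * s)) := by
        rw [mul_assoc]
        gcongr
    _ = ρ * (1 - 2 * s) := by field_simp
    _ ≤ specRadius (deleteVertex G u) * (1 - s) := hdel

end DeleteVertex

/-! ### Complete multipartite blow-ups -/

section Blowup

variable {ι : Type*}

/-- The parts `B i`, for `i ∈ s`, have `t` vertices each and are completely joined to each other
in `G`, i.e. they span a complete multipartite subgraph of `G`. -/
structure IsBlowup {V : Type*} (G : SimpleGraph V) (s : Finset ι) (B : ι → Finset V) (t : ℕ) :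
    Prop where
  card_eq : ∀ i ∈ s, #(B i) = t
  pairwise : (s : Set ι).Pairwise fun i j => G.IsCompleteBetween (B i) (B j)

section

variable {V : Type*} {G : SimpleGraph V} {s : Finset ι} {B : ι → Finset V} {t : ℕ}

theorem IsBlowup.mono {t' : ℕ} {B' : ι → Finset V} (hB : IsBlowup G s B t)
    (hsub : ∀ i ∈ s, B' i ⊆ B i) (hcard : ∀ i ∈ s, #(B' i) = t') : IsBlowup G s B' t' :=
  ⟨hcard, fun i hi j hj hij _ hv _ hw =>
    hB.pairwise hi hj hij (hsub i hi hv) (hsub j hj hw)⟩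

theorem IsBlowup.insert_update {i₀ : ι} (hi₀ : i₀ ∉ s) (hB : IsBlowup G s B t) {S : Finset V}
    (hS : #S = t) (hadj : ∀ i ∈ s, G.IsCompleteBetween S (B i)) :
    IsBlowup G (insert i₀ s) (Function.update B i₀ S) t := by
  have hne : ∀ i ∈ s, i ≠ i₀ := fun i hi => ne_of_mem_of_not_mem hi hi₀
  refine ⟨forall_mem_insert .. |>.2 ⟨by simpa using hS, fun i hi => ?_⟩, ?_⟩
  · simpa [hne i hi] using hB.card_eq i hi
  · have : Std.Symm fun i j => G.IsCompleteBetween (Function.update B i₀ S i : Set V)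
        (Function.update B i₀ S j) := ⟨fun _ _ h => h.symm⟩
    rw [coe_insert, Set.pairwise_insert_of_symm]
    refine ⟨fun i hi j hj hij => ?_, fun i hi _ => ?_⟩
    · simpa [hne i hi, hne j hj] using hB.pairwise hi hj hij
    · simpa [hne i hi] using hadj i hi

theorem exists_common_subsets {A : Finset V} (hB : ∀ i ∈ s, t ≤ #(B i))
    (hA : ∀ v ∈ A, ∀ i ∈ s, t ≤ #{w ∈ B i | G.Adj v w})
    (hcard : (∏ i ∈ s, (#(B i)).choose t) * t ≤ #A) :
    ∃ S ⊆ A, #S = t ∧ ∃ B' : ι → Finset V,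
      ∀ i ∈ s, B' i ⊆ B i ∧ #(B' i) = t ∧ G.IsCompleteBetween S (B' i) := by
  have hP : ∀ v ∈ A, ∀ i ∈ s, ∃ P ∈ powersetCard t (B i), ∀ w ∈ P, G.Adj v w := by
    intro v hv i hi
    obtain ⟨P, hP, hPt⟩ := exists_subset_card_eq (hA v hv i hi)
    exact ⟨P, mem_powersetCard.2 ⟨hP.trans (filter_subset _ _), hPt⟩,
      fun w hw => (mem_filter.1 (hP hw)).2⟩
  choose! P hPmem hPadj using hP
  have hpi : #(s.pi fun i => powersetCard t (B i)) = ∏ i ∈ s, (#(B i)).choose t := by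
    simp only [card_pi, card_powersetCard]
  obtain ⟨y, hy, hfib⟩ := exists_le_card_fiber_of_mul_le_card_of_maps_to (n := t)
    (f := fun v i (_ : i ∈ s) => P v i) (fun v hv => mem_pi.2 fun i hi => hPmem v hv i hi)
    (card_pos.1 (hpi ▸ prod_pos fun i hi => Nat.choose_pos (hB i hi))) (hpi ▸ hcard)
  obtain ⟨S, hS, hSt⟩ := exists_subset_card_eq hfib
  refine ⟨S, hS.trans (filter_subset _ _), hSt, ?_⟩
  suffices ∀ i ∈ s, ∃ P ⊆ B i, #P = t ∧ G.IsCompleteBetween S P by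
    choose! B' hB' using this
    exact ⟨B', hB'⟩
  intro i hi
  obtain ⟨hsub, hyt⟩ := mem_powersetCard.1 (mem_pi.1 hy i hi)
  refine ⟨y i hi, hsub, hyt, fun v hv w hw => ?_⟩
  obtain ⟨hvA, hvy⟩ := mem_filter.1 (hS hv)
  exact hPadj v hvA i hi w (congrFun (congrFun hvy i) hi ▸ hw)

theorem IsBlowup.exists_insert {t' : ℕ} {i₀ : ι} (hi₀ : i₀ ∉ s) (hB : IsBlowup G s B t')
    (ht : t ≤ t') {U : Finset V}
    (hU : t'.choose t ^ #s * t ≤ #{v ∈ U | ∀ i ∈ s, t ≤ #{w ∈ B i | G.Adj v w}}) :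
    ∃ B', IsBlowup G (insert i₀ s) B' t ∧ (∀ i ∈ s, B' i ⊆ B i) ∧ B' i₀ ⊆ U := by
  obtain ⟨S, hSA, hSt, B', hB'⟩ := exists_common_subsets (G := G)
    (A := {v ∈ U | ∀ i ∈ s, t ≤ #{w ∈ B i | G.Adj v w}}) (fun i hi => (hB.card_eq i hi).symm ▸ ht)
    (fun v hv => (mem_filter.1 hv).2)
    (hU.trans' (by rw [prod_congr rfl fun i hi => by rw [hB.card_eq i hi], prod_const]))
  refine ⟨Function.update B' i₀ S, (hB.mono (fun i hi => (hB' i hi).1)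
    fun i hi => (hB' i hi).2.1).insert_update hi₀ hSt fun i hi => (hB' i hi).2.2,
    fun i hi => ?_, ?_⟩
  · simpa [ne_of_mem_of_not_mem hi hi₀] using (hB' i hi).1
  · simpa using hSA.trans (filter_subset _ _)

variable [Fintype V]

theorem card_filter_card_adj_lt_mul_le {D : ℝ} {S : Finset V}
    (hD : ∀ w ∈ S, Fintype.card V - D ≤ G.degree w) (t : ℕ) :
    #{v | #{w ∈ S | G.Adj v w} < t} * ((#S : ℝ) - t) ≤ #S * D := by
  simp only [← nsmul_eq_mul]
  refine card_nsmul_le_card_nsmul (r := fun v w => ¬ G.Adj v w) (fun v hv => ?_) fun w hw => ?_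
  · have hlt := (mem_filter.1 hv).2
    have hsplit : #{w ∈ S | G.Adj v w} + #(bipartiteAbove (fun v w => ¬ G.Adj v w) S v) = #S := by
      convert! card_filter_add_card_filter_not (s := S) (G.Adj v)
    have : #S ≤ #(bipartiteAbove (fun v w => ¬ G.Adj v w) S v) + t := by omega
    rw [sub_le_iff_le_add]
    exact_mod_cast this
  · have hsub : bipartiteBelow (fun v w => ¬ G.Adj v w) {v | #{w ∈ S | G.Adj v w} < t} w ⊆
        (G.neighborFinset w)ᶜ := by
      intro v hv
      simpa [G.adj_comm] using ((mem_bipartiteBelow _).1 hv).2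
    have hcard := (Nat.cast_le (α := ℝ)).2 (card_le_card hsub)
    rw [card_compl, Nat.cast_sub (card_le_univ _), card_neighborFinset_eq_degree] at hcard
    linarith [hD w hw]

theorem IsBlowup.card_sub_card_filter_mul_le {D : ℝ} {t' : ℕ} (hB : IsBlowup G s B t')
    (hD : ∀ v, Fintype.card V - D ≤ G.degree v) (ht : t ≤ t') (U : Finset V) :
    ((#U : ℝ) - #{v ∈ U | ∀ i ∈ s, t ≤ #{w ∈ B i | G.Adj v w}}) * (t' - t) ≤ #s * (t' * D) := by
  have hcover : U ⊆ {v ∈ U | ∀ i ∈ s, t ≤ #{w ∈ B i | G.Adj v w}} ∪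
      s.biUnion fun i => {v | #{w ∈ B i | G.Adj v w} < t} := by
    intro v hv
    by_cases h : ∀ i ∈ s, t ≤ #{w ∈ B i | G.Adj v w}
    · exact mem_union_left _ (mem_filter.2 ⟨hv, h⟩)
    · push Not at h
      exact mem_union_right _ (by simpa using h)
  have hcard := (card_le_card hcover).trans <|
    (card_union_le _ _).trans (Nat.add_le_add_left card_biUnion_le _)
  have hcard' : (#U : ℝ) - #{v ∈ U | ∀ i ∈ s, t ≤ #{w ∈ B i | G.Adj v w}} ≤
      ∑ i ∈ s, (#{v | #{w ∈ B i | G.Adj v w} < t} : ℝ) := by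
    rw [sub_le_iff_le_add']
    exact_mod_cast hcard
  have ht' : (0 : ℝ) ≤ t' - t := sub_nonneg.2 (Nat.cast_le.2 ht)
  refine (mul_le_mul_of_nonneg_right hcard' ht').trans ?_
  rw [sum_mul, ← nsmul_eq_mul]
  refine sum_le_card_nsmul _ _ _ fun i hi => ?_
  simpa only [hB.card_eq i hi] using card_filter_card_adj_lt_mul_le (fun w (_ : w ∈ B i) => hD w) t

end

variable {s : Finset ι} {κ δ : ℝ}

-- The size `t'` is chosen so that at most `(#s * κ + δ / 2) * card V` vertices have fewer than `t`
-- neighbours in some part.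
theorem exists_isBlowup_insert (hδ : 0 < δ) {i₀ : ι} (hi₀ : i₀ ∉ s) (t : ℕ) :
    ∃ t' N : ℕ, ∀ {V : Type u} [Fintype V] {G : SimpleGraph V} {B : ι → Finset V} {U : Finset V},
      N ≤ Fintype.card V → (∀ v, (1 - κ) * Fintype.card V ≤ G.degree v) → IsBlowup G s B t' →
      (#s * κ + δ) * Fintype.card V ≤ #U →
      ∃ B', IsBlowup G (insert i₀ s) B' t ∧ (∀ i ∈ s, B' i ⊆ B i) ∧ B' i₀ ⊆ U := by
  obtain ⟨q, hq⟩ := exists_nat_ge (#s * κ * t / (δ / 2))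
  set t' := t + (q + 1) with ht'
  obtain ⟨N, hN⟩ := exists_nat_ge (t'.choose t ^ #s * t / (δ / 2))
  refine ⟨t', N, fun {V _ G B U} hcard hdeg hB hU => hB.exists_insert hi₀ (by omega) ?_⟩
  set n : ℝ := (Fintype.card V : ℝ)
  set A := {v ∈ U | ∀ i ∈ s, t ≤ #{w ∈ B i | G.Adj v w}}
  have hbad : (#U - #A : ℝ) * (q + 1) ≤ #s * (t' * (κ * n)) := by
    have := hB.card_sub_card_filter_mul_le (D := κ * n)
      (fun v => (hdeg v).trans' (by linarith)) (show t ≤ t' by omega) U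
    simpa [ht'] using this
  have hqn : #s * κ * t * n ≤ δ / 2 * (q + 1) * n := by
    rw [div_le_iff₀ (by positivity)] at hq
    exact mul_le_mul_of_nonneg_right (by linarith) (Nat.cast_nonneg _)
  have hUA : (#U - #A : ℝ) ≤ (#s * κ + δ / 2) * n := by
    refine le_of_mul_le_mul_right (hbad.trans ?_) (by positivity : (0 : ℝ) < q + 1)
    push_cast [ht']
    linarith
  have hNn : (t'.choose t ^ #s * t : ℝ) ≤ δ / 2 * n := by
    rw [div_le_iff₀' (by positivity)] at hN
    exact hN.trans (mul_le_mul_of_nonneg_left (Nat.cast_le.2 hcard) (by positivity))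
  have : (t'.choose t ^ #s * t : ℝ) ≤ #A := by linarith
  exact_mod_cast this

theorem exists_isBlowup (hκ : 0 ≤ κ) (hδ : 0 < δ) (s : Finset ι) (t : ℕ) :
    ∃ N : ℕ, ∀ {V : Type u} [Fintype V] {G : SimpleGraph V} {U : Finset V},
      N ≤ Fintype.card V → (∀ v, (1 - κ) * Fintype.card V ≤ G.degree v) →
      ((#s - 1) * κ + δ) * Fintype.card V ≤ #U → ∃ B, IsBlowup G s B t ∧ ∀ i ∈ s, B i ⊆ U := by
  induction s using Finset.induction generalizing t with
  | empty => exact ⟨0, fun _ _ _ => ⟨fun _ => ∅, ⟨by simp, by simp⟩, by simp⟩⟩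
  | insert i₀ s hi₀ ih =>
    obtain ⟨t', N₁, hext⟩ := exists_isBlowup_insert hδ hi₀ t
    obtain ⟨N₂, hblow⟩ := ih t'
    refine ⟨max N₁ N₂, fun {V _ G U} hN hdeg hU => ?_⟩
    rw [card_insert_of_notMem hi₀, Nat.cast_add_one, add_sub_cancel_right] at hU
    obtain ⟨B, hB, hBU⟩ := hblow ((le_max_right _ _).trans hN) hdeg <|
      hU.trans' (by gcongr; linarith)
    obtain ⟨B', hB', hsub, hB'U⟩ := hext ((le_max_left _ _).trans hN) hdeg hB hU
    exact ⟨B', hB', forall_mem_insert .. |>.2 ⟨hB'U, fun i hi => (hsub i hi).trans (hBU i hi)⟩⟩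

end Blowup

/-! ### Embedding graphs with a colour-critical edge -/

section Embedding

theorem exists_embedding_eqOn {α β : Type*} [Fintype α] {s : Set α} {t : Finset β} {f : α → β}
    (hcard : Fintype.card α ≤ #t) (hf : Set.MapsTo f s t) (hinj : Set.InjOn f s) :
    ∃ g : α ↪ β, (∀ a, g a ∈ t) ∧ Set.EqOn g f s := by
  have hst : image f s.toFinset ⊆ t := image_subset_iff.2 fun a ha => hf (Set.mem_toFinset.1 ha)
  obtain ⟨u, hsu, hut, hu⟩ := exists_subsuperset_card_eq hst
    (card_image_le.trans (card_le_univ _)) hcard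
  obtain ⟨g, hg⟩ := exists_equiv_extend_of_card_eq hu.symm hsu (by simpa using hinj)
  exact ⟨g.toEmbedding.trans (Function.Embedding.subtype _), fun a => hut (g a).2,
    fun a ha => hg a (Set.mem_toFinset.2 ha)⟩

variable {α ι V : Type*} [Fintype α] {H : SimpleGraph α} {p q : α}
  (C : (H.deleteEdges {s(p, q)}).Coloring ι) {G : SimpleGraph V} {B : ι → Finset V} {x y : V}

include C

theorem isContained_of_coloring_deleteEdges (hpq : p ≠ q) (hC : C p = C q)
    (hcard : ∀ i, Fintype.card α ≤ #(B i))
    (hB : Pairwise fun i j => G.IsCompleteBetween (B i) (B j))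
    (hx : x ∈ B (C p)) (hy : y ∈ B (C p)) (hxy : G.Adj x y) : H ⊑ G := by
  have hg : ∀ i, ∃ g : α ↪ V, (∀ a, g a ∈ B i) ∧ (i = C p → g p = x ∧ g q = y) := by
    intro i
    obtain rfl | hi := eq_or_ne i (C p)
    · obtain ⟨g, hgB, hg⟩ := exists_embedding_eqOn (s := {p, q})
        (f := fun a => if a = p then x else y) (hcard (C p))
        (by simp [Set.MapsTo, hx, hpq.symm, hy])
        (by simp [Set.InjOn, hpq.symm, hxy.ne, hxy.ne'])
      exact ⟨g, hgB, fun _ => ⟨by simpa using hg (Set.mem_insert p _),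
        by simpa [hpq.symm] using hg (Set.mem_insert_of_mem p rfl)⟩⟩
    · obtain ⟨g, hgB, -⟩ := exists_embedding_eqOn (s := ∅) (f := fun _ => x) (hcard i)
        (Set.mapsTo_empty _ _) (Set.injOn_empty _)
      exact ⟨g, hgB, fun h => absurd h hi⟩
  choose g hgB hg using hg
  have hadj : ∀ a b, C a ≠ C b → G.Adj (g (C a) a) (g (C b) b) := fun a b hab =>
    hB hab (hgB _ a) (hgB _ b)
  refine ⟨⟨⟨fun a => g (C a) a, fun {a b} hab => ?_⟩, fun a b hab => ?_⟩⟩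
  · by_cases hedge : s(a, b) = s(p, q)
    · obtain ⟨rfl, rfl⟩ | ⟨rfl, rfl⟩ := Sym2.eq_iff.1 hedge
      · rw [← hC, (hg _ rfl).1, (hg _ rfl).2]
        exact hxy
      · rw [← hC, (hg _ rfl).1, (hg _ rfl).2]
        exact hxy.symm
    · exact hadj a b (C.valid (deleteEdges_adj.2 ⟨hab, hedge⟩))
  · by_cases hCab : C a = C b
    · exact (g (C a)).injective (hab.trans (by simp only [hCab]; rfl))
    · exact absurd hab (hadj a b hCab).ne

theorem isContained_of_isBlowup [Fintype ι] (hpq : p ≠ q) (hC : C p = C q)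
    (hB : IsBlowup G univ B (Fintype.card α)) (hxy : G.Adj x y)
    (hx : ∀ i ≠ C p, G.IsCompleteBetween {x, y} (B i)) : H ⊑ G := by
  set B' := Function.update B (C p) (B (C p) ∪ {x, y})
  have hCp : ∀ i ≠ C p, G.IsCompleteBetween (B' (C p)) (B i) := by
    intro i hi v hv w hw
    obtain hv | hv : v ∈ B (C p) ∨ v ∈ ({x, y} : Set V) := by
      simpa [B', or_assoc, or_comm] using hv
    · exact hB.pairwise (mem_coe.2 (mem_univ _)) (mem_coe.2 (mem_univ _)) hi.symm hv hw
    · exact hx i hi hv hw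
  have hB' : ∀ i ≠ C p, B' i = B i := fun i hi => Function.update_of_ne hi _ _
  refine isContained_of_coloring_deleteEdges C (B := B') hpq hC (fun i => ?_)
    (fun i j hij => ?_) (by simp [B']) (by simp [B']) hxy
  · obtain rfl | hi := eq_or_ne i (C p)
    · simpa [B', hB.card_eq (C p) (mem_univ _)] using
        card_le_card (subset_union_left (s₁ := B (C p)) (s₂ := {x, y}))
    · rw [hB' i hi, hB.card_eq i (mem_univ _)]
  · obtain rfl | hi := eq_or_ne i (C p)
    · rw [hB' j hij.symm]
      exact hCp j hij.symm
    obtain rfl | hj := eq_or_ne j (C p)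
    · rw [hB' i hi]
      exact (hCp i hi).symm
    · rw [hB' i hi, hB' j hj]
      exact hB.pairwise (mem_coe.2 (mem_univ i)) (mem_coe.2 (mem_univ j)) hij

end Embedding

/-! ### Dense graphs without a given subgraph -/

section Dense

open scoped Topology

section

variable {V : Type*} [Fintype V] (G : SimpleGraph V) (Q : Finset V)

theorem sum_card_neighborFinset_inter :
    ∑ e ∈ Q.offDiag, #(G.neighborFinset e.1 ∩ G.neighborFinset e.2) =
      ∑ v, #{x ∈ Q | G.Adj x v}.offDiag := by
  convert! sum_card_bipartiteAbove_eq_sum_card_bipartiteBelow (s := Q.offDiag) (t := univ)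
    (fun e v => G.Adj e.1 v ∧ G.Adj e.2 v) using 3 with e _ v
  · ext v; simp [bipartiteAbove]
  · ext e; simp only [bipartiteBelow, mem_offDiag, mem_filter]; tauto

-- Sum `(d - k) * (d - (k - 1)) ≥ 0` over all vertices, `d` being the number of neighbours in `Q`.
theorem mul_sum_degree_le (k : ℕ) :
    (2 * k - 2 : ℝ) * ∑ x ∈ Q, (G.degree x : ℝ) ≤
      ∑ e ∈ Q.offDiag, (#(G.neighborFinset e.1 ∩ G.neighborFinset e.2) : ℝ) +
        k * (k - 1) * Fintype.card V := by
  have hpoint : ∀ d : ℕ, (2 * k - 2 : ℝ) * d ≤ ((d * d - d : ℕ) : ℝ) + k * (k - 1) := by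
    intro d
    have hint : (0 : ℤ) ≤ (d - k) * (d - (k - 1)) := by
      obtain h | h := le_or_gt (k : ℤ) d
      · exact mul_nonneg (by omega) (by omega)
      · exact mul_nonneg_of_nonpos_of_nonpos (by omega) (by omega)
    have hreal : (0 : ℝ) ≤ (d - k) * (d - (k - 1)) := by exact_mod_cast hint
    rw [Nat.cast_sub (Nat.le_mul_self d)]
    push_cast
    linarith
  have hdeg : ∑ x ∈ Q, G.degree x = ∑ v, #{x ∈ Q | G.Adj x v} := by
    simp only [← card_neighborFinset_eq_degree, neighborFinset_eq_filter]
    convert! sum_card_bipartiteAbove_eq_sum_card_bipartiteBelow G.Adj (s := Q) (t := univ)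
  have hcodeg := sum_card_neighborFinset_inter G Q
  simp only [offDiag_card] at hcodeg
  rw [← Nat.cast_sum, ← Nat.cast_sum, hdeg, hcodeg, Nat.cast_sum, Nat.cast_sum, mul_sum,
    mul_comm _ (Fintype.card V : ℝ), ← card_univ, ← nsmul_eq_mul, ← sum_const, ← sum_add_distrib]
  exact sum_le_sum fun v _ => hpoint _

variable {G Q}

theorem exists_le_card_neighborFinset_inter {k : ℕ} (hk : 1 ≤ k) (hQ : #Q = k + 1) {d : ℝ}
    (hd : ∀ x ∈ Q, d ≤ G.degree x) :
    ∃ x ∈ Q, ∃ y ∈ Q, x ≠ y ∧ (2 * k - 2) * (k + 1) * d - k * (k - 1) * Fintype.card V ≤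
      k * (k + 1) * (#(G.neighborFinset x ∩ G.neighborFinset y) : ℝ) := by
  have hk' : (1 : ℝ) ≤ k := by exact_mod_cast hk
  have hoff : #Q.offDiag = k * (k + 1) := by
    rw [offDiag_card, hQ, ← Nat.sub_one_mul]; simp
  have hdeg : (k + 1) * d ≤ ∑ x ∈ Q, (G.degree x : ℝ) := by
    have := card_nsmul_le_sum Q _ d hd
    rwa [hQ, nsmul_eq_mul, Nat.cast_add_one] at this
  have hsum : ∑ _e ∈ Q.offDiag, ((2 * k - 2) * (k + 1) * d - k * (k - 1) * Fintype.card V) ≤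
      ∑ e ∈ Q.offDiag, k * (k + 1) * (#(G.neighborFinset e.1 ∩ G.neighborFinset e.2) : ℝ) := by
    rw [sum_const, hoff, nsmul_eq_mul, ← mul_sum]
    push_cast
    gcongr
    nlinarith [mul_sum_degree_le G Q k]
  obtain ⟨e, he, hle⟩ := exists_le_of_sum_le (card_pos.1 (by rw [hoff]; positivity)) hsum
  obtain ⟨hx, hy, hxy⟩ := mem_offDiag.1 he
  exact ⟨e.1, hx, e.2, hy, hxy, hle⟩

end

-- At `η = 0` the inequalities hold with gaps `2 / k`, `1 / k` and `1 / k`; the last of them is the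
-- Andrásfai–Erdős–Sós degree condition.
theorem exists_slack {k : ℝ} (hk : 1 ≤ k) : ∃ η > 0,
    ((k - 2) * (1 / k + η) + η) * (k * (k + 1)) <
        (2 * k - 2) * (k + 1) * (1 - (1 / k + η)) - k * (k - 1) ∧
      (k - 1) * (1 / k + η) + η < 1 ∧ 3 * k - 4 < (1 - (1 / k + η)) * (3 * k - 1) := by
  have hpos : 0 < k := by linarith
  have h₁ : ∀ᶠ η in 𝓝[>] (0 : ℝ), ((k - 2) * (1 / k + η) + η) * (k * (k + 1)) <
      (2 * k - 2) * (k + 1) * (1 - (1 / k + η)) - k * (k - 1) := by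
    refine nhdsWithin_le_nhds <| ContinuousAt.eventually_lt (by fun_prop) (by fun_prop) ?_
    have : (2 * k - 2) * (k + 1) * (1 - (1 / k + 0)) - k * (k - 1) -
        ((k - 2) * (1 / k + 0) + 0) * (k * (k + 1)) = 2 / k := by
      field_simp
      ring
    have : 0 < 2 / k := by positivity
    linarith
  have h₂ : ∀ᶠ η in 𝓝[>] (0 : ℝ), (k - 1) * (1 / k + η) + η < 1 := by
    refine nhdsWithin_le_nhds <| ContinuousAt.eventually_lt (by fun_prop) (by fun_prop) ?_
    rw [add_zero, add_zero, mul_one_div, div_lt_one hpos]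
    linarith
  have h₃ : ∀ᶠ η in 𝓝[>] (0 : ℝ), 3 * k - 4 < (1 - (1 / k + η)) * (3 * k - 1) := by
    refine nhdsWithin_le_nhds <| ContinuousAt.eventually_lt (by fun_prop) (by fun_prop) ?_
    have : (1 - (1 / k + 0)) * (3 * k - 1) - (3 * k - 4) = 1 / k := by
      field_simp
      ring
    have : 0 < 1 / k := by positivity
    linarith
  have h₀ : ∀ᶠ η in 𝓝[>] (0 : ℝ), 0 < η := self_mem_nhdsWithin
  obtain ⟨η, hη, h⟩ := (h₀.and (h₁.and (h₂.and h₃))).exists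
  exact ⟨η, hη, h⟩

variable {α ι : Type*} [Finite α] [Fintype ι] {H : SimpleGraph α} {p q : α}
  (C : (H.deleteEdges {s(p, q)}).Coloring ι)

include C

theorem exists_cliqueFree (hpq : p ≠ q) (hC : C p = C q) {κ δ : ℝ} (hκ : 0 ≤ κ) (hδ : 0 < δ)
    (hW : ((Fintype.card ι - 2) * κ + δ) * (Fintype.card ι * (Fintype.card ι + 1)) ≤
      (2 * Fintype.card ι - 2) * (Fintype.card ι + 1) * (1 - κ) -
        Fintype.card ι * (Fintype.card ι - 1))
    (hU : (Fintype.card ι - 1) * κ + δ ≤ 1) :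
    ∃ N : ℕ, ∀ {V : Type u} [Fintype V] {G : SimpleGraph V}, N ≤ Fintype.card V →
      (∀ v, (1 - κ) * Fintype.card V ≤ G.degree v) → H.Free G →
      G.CliqueFree (Fintype.card ι + 1) := by
  cases nonempty_fintype α
  set k := Fintype.card ι with hk
  have hk1 : 1 ≤ k := Fintype.card_pos_iff.2 ⟨C p⟩
  have hs : (#(univ.erase (C p)) : ℝ) = k - 1 := by
    rw [card_erase_of_mem (mem_univ _), card_univ, ← hk, Nat.cast_sub hk1, Nat.cast_one]
  obtain ⟨t, N₁, hins⟩ := exists_isBlowup_insert.{u} (κ := κ) hδ (notMem_erase (C p) univ)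
    (Fintype.card α)
  obtain ⟨N₂, hblow⟩ := exists_isBlowup.{u} hκ hδ (univ.erase (C p)) t
  refine ⟨max N₁ N₂, fun {V _ G} hN hdeg hfree Q hQ => hfree ?_⟩
  set n : ℝ := (Fintype.card V : ℝ)
  obtain ⟨x, hx, y, hy, hxy, hcodeg⟩ := exists_le_card_neighborFinset_inter hk1 hQ.card_eq
    fun x _ => hdeg x
  have hWcard : ((k - 2) * κ + δ) * n ≤ #(G.neighborFinset x ∩ G.neighborFinset y) := by
    refine le_of_mul_le_mul_left ?_ (by positivity : (0 : ℝ) < k * (k + 1))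
    refine le_trans ?_ hcodeg
    linarith [mul_le_mul_of_nonneg_right hW (Nat.cast_nonneg (Fintype.card V) : (0 : ℝ) ≤ n)]
  obtain ⟨B, hB, hBW⟩ := hblow ((le_max_right _ _).trans hN) hdeg <| hWcard.trans' <| by
    rw [hs, sub_sub, one_add_one_eq_two]
  obtain ⟨B', hB', hsub, -⟩ := hins (U := univ) ((le_max_left _ _).trans hN) hdeg hB <| by
    rw [hs, card_univ]
    exact mul_le_of_le_one_left (Nat.cast_nonneg _) hU
  rw [insert_erase (mem_univ _)] at hB'
  refine isContained_of_isBlowup C hpq hC hB' (hQ.isClique hx hy hxy) fun i hi v hv w hw => ?_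
  have hi' : i ∈ univ.erase (C p) := mem_erase.2 ⟨hi, mem_univ _⟩
  have hw' := mem_inter.1 (hBW i hi' (hsub i hi' hw))
  obtain rfl | rfl := hv
  · exact (mem_neighborFinset ..).1 hw'.1
  · exact (mem_neighborFinset ..).1 hw'.2

theorem exists_colorable (hpq : p ≠ q) (hC : C p = C q) :
    ∃ η > (0 : ℝ), ∃ N : ℕ, ∀ {V : Type u} [Fintype V] {G : SimpleGraph V}, N ≤ Fintype.card V →
      (∀ v, (1 - 1 / Fintype.card ι - η) * Fintype.card V ≤ G.degree v) → H.Free G →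
      G.Colorable (Fintype.card ι) := by
  have hk1 : 1 ≤ Fintype.card ι := Fintype.card_pos_iff.2 ⟨C p⟩
  obtain ⟨η, hη, hW, hU, hAES⟩ := exists_slack (k := Fintype.card ι) (by exact_mod_cast hk1)
  obtain ⟨N, hN⟩ := exists_cliqueFree.{u} C hpq hC (by positivity) hη hW.le hU.le
  refine ⟨η, hη, max N 1, fun {V _ G} hcard hdeg hfree => ?_⟩
  simp only [sub_sub] at hdeg
  have hclique := hN ((le_max_left _ _).trans hcard) hdeg hfree
  have hV : 0 < Fintype.card V := (le_max_right _ _).trans hcard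
  have : Nonempty V := Fintype.card_pos_iff.1 hV
  generalize Fintype.card ι = k at *
  obtain rfl | hk2 := hk1.eq_or_lt
  · rw [cliqueFree_two.1 hclique]
    exact ⟨SimpleGraph.Coloring.mk (fun _ => 0) (by simp)⟩
  refine colorable_of_cliqueFree_lt_minDegree hclique ?_
  obtain ⟨v, hv⟩ := G.exists_minimal_degree_vertex
  rw [hv, Nat.div_lt_iff_lt_mul (by omega)]
  have hreal : ((3 * k - 4 : ℕ) : ℝ) * Fintype.card V < G.degree v * (3 * k - 1 : ℕ) := by
    rw [Nat.cast_sub (by omega), Nat.cast_sub (by omega)]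
    push_cast
    have hk : (2 : ℝ) ≤ k := by exact_mod_cast hk2
    calc (3 * k - 4 : ℝ) * Fintype.card V
        < (1 - (1 / k + η)) * (3 * k - 1) * Fintype.card V := by gcongr
      _ = (1 - (1 / k + η)) * Fintype.card V * (3 * k - 1) := by ring
      _ ≤ G.degree v * (3 * k - 1) := mul_le_mul_of_nonneg_right (hdeg v) (by linarith)
  exact_mod_cast hreal

end Dense

/-! ### Spectral extremal graphs -/

section Extremal

-- If `c < specRadius G / card V`, vertices can be deleted one at a time, and going from `n + 1` to
-- `n` vertices raises the density by `γ / n`; the sum of these increments is at most `1`.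
theorem specRadius_div_card_le {α : Type*} {H : SimpleGraph α} {c γ : ℝ} {N : ℕ} (hN : 1 ≤ N)
    (hγ : 0 < γ)
    (hstep : ∀ {V : Type u} [Fintype V] {G : SimpleGraph V}, N ≤ Fintype.card V → H.Free G →
      c * Fintype.card V < specRadius G →
      ∃ u, specRadius G / Fintype.card V * (Fintype.card V - 1) + γ ≤
        specRadius (deleteVertex G u))
    {n : ℕ} (hn : N ≤ n) {V : Type u} [Fintype V] {G : SimpleGraph V} (hV : Fintype.card V = n)
    (hG : H.Free G) (hc : c * n < specRadius G) :
    specRadius G / n ≤ 1 - γ * Real.log (n / N) := by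
  induction n, hn using Nat.le_induction generalizing V with
  | base =>
    rw [div_self (by positivity), Real.log_one, mul_zero, sub_zero, ← hV]
    exact div_le_one_of_le₀ (specRadius_le_card G) (Nat.cast_nonneg _)
  | succ n hn ih =>
    have hn0 : (0 : ℝ) < n := by exact_mod_cast hN.trans hn
    obtain ⟨u, hu⟩ := hstep (by omega) hG (by rwa [hV])
    rw [hV, Nat.cast_add_one, add_sub_cancel_right] at hu
    rw [← lt_div_iff₀ (by positivity), Nat.cast_add_one] at hc
    have hcard : Fintype.card {v // v ≠ u} = n := by
      have := card_subtype_ne u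
      omega
    have hdensity := ih hcard (free_deleteVertex hG u) <| by
      linarith [mul_lt_mul_of_pos_right hc hn0]
    have hgain : specRadius G / (n + 1) + γ / n ≤ specRadius (deleteVertex G u) / n := by
      rw [le_div_iff₀ hn0, add_mul, div_mul_cancel₀ _ hn0.ne']
      exact hu
    have hlog : Real.log ((n + 1) / N) ≤ Real.log (n / N) + 1 / n := by
      have hsplit : ((n : ℝ) + 1) / N = n / N * (1 + 1 / n) := by field_simp
      rw [hsplit, Real.log_mul (by positivity) (by positivity)]
      gcongr
      linarith [Real.log_le_sub_one_of_pos (by positivity : 0 < 1 + 1 / (n : ℝ))]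
    rw [Nat.cast_add_one]
    have := mul_le_mul_of_nonneg_left hlog hγ.le
    rw [mul_add, mul_one_div] at this
    linarith

variable {α ι : Type*} [Finite α] [Fintype ι] {H : SimpleGraph α} {p q : α}
  (C : (H.deleteEdges {s(p, q)}).Coloring ι)

include C

theorem exists_le_specRadius_deleteVertex_of_free (hpq : p ≠ q) (hC : C p = C q) :
    ∃ e > (0 : ℝ), ∃ N : ℕ, ∀ {V : Type u} [Fintype V] {G : SimpleGraph V}, N ≤ Fintype.card V →
      H.Free G → ¬ G.Colorable (Fintype.card ι) →
      (1 - 1 / Fintype.card ι - e) * Fintype.card V ≤ specRadius G →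
      ∃ u, specRadius G / Fintype.card V * (Fintype.card V - 1) + e ^ 2 / 2 ≤
        specRadius (deleteVertex G u) := by
  obtain ⟨η, hη, N₁, hN₁⟩ := exists_colorable.{u} C hpq hC
  obtain ⟨N₂, hN₂⟩ := exists_nat_ge (2 / (η / 2))
  refine ⟨η / 2, by positivity, max (max N₁ N₂) 1, fun {V _ G} hcard hG hcol hρ => ?_⟩
  have hcard₂ : (N₂ : ℝ) ≤ Fintype.card V := by exact_mod_cast (by omega : N₂ ≤ Fintype.card V)
  have hn : (0 : ℝ) < Fintype.card V := by exact_mod_cast (by omega : 0 < Fintype.card V)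
  obtain ⟨v, hv⟩ : ∃ v, G.degree v < (1 - 1 / Fintype.card ι - η) * (Fintype.card V : ℝ) := by
    by_contra! hdeg
    exact hcol (hN₁ (by omega) hdeg hG)
  have hdeg : G.degree v ≤ specRadius G - η / 2 * Fintype.card V := by linarith
  obtain ⟨u, hu⟩ := exists_le_specRadius_deleteVertex G (half_pos hη)
    ((div_le_iff₀' (half_pos hη)).1 (hN₂.trans hcard₂)) hdeg
  have hdensity : η / 2 ≤ specRadius G / Fintype.card V := by
    rw [le_div_iff₀ hn]
    linarith [Nat.cast_nonneg (α := ℝ) (G.degree v)]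
  refine ⟨u, hu.trans' ?_⟩
  rw [mul_add]
  gcongr
  linarith [mul_le_mul_of_nonneg_right hdensity (by positivity : 0 ≤ η / 2 / 2)]

theorem exists_specRadius_le_of_free (hpq : p ≠ q) (hC : C p = C q) :
    ∃ N : ℕ, ∀ {V : Type u} [Fintype V] {G : SimpleGraph V}, N ≤ Fintype.card V → H.Free G →
      specRadius G ≤ (1 - 1 / Fintype.card ι) * Fintype.card V := by
  obtain ⟨e, he, N, hN⟩ := exists_le_specRadius_deleteVertex_of_free.{u} C hpq hC
  have htendsto : Filter.Tendsto (fun n : ℕ => e ^ 2 / 2 * Real.log (n / (max N 1 : ℕ)))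
      Filter.atTop Filter.atTop :=
    (Real.tendsto_log_atTop.comp <| tendsto_natCast_atTop_atTop.atTop_div_const
      (by positivity)).const_mul_atTop (by positivity)
  obtain ⟨N', hN'⟩ := Filter.eventually_atTop.1 <|
    htendsto.eventually_gt_atTop (1 / Fintype.card ι : ℝ)
  refine ⟨max (max N 1) N', fun {V _ G} hcard hG => ?_⟩
  by_contra! hρ
  have hdensity := specRadius_div_card_le (le_max_right N 1) (by positivity)
    (fun {V _ G} hV hG hρ => hN ((le_max_left _ _).trans hV) hG
      (fun hcol => hρ.not_ge <| by
        obtain ⟨C'⟩ := hcol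
        simpa using specRadius_le_of_coloring C')
      (hρ.le.trans' <| mul_le_mul_of_nonneg_right (by linarith) (Nat.cast_nonneg _)))
    ((le_max_left _ _).trans hcard) rfl hG hρ
  have hn : (0 : ℝ) < Fintype.card V := by exact_mod_cast (by omega : 0 < Fintype.card V)
  rw [← lt_div_iff₀ hn] at hρ
  linarith [hN' (Fintype.card V) ((le_max_right _ _).trans hcard)]

theorem exists_specRadius_lt_turanGraph (hpq : p ≠ q) (hC : C p = C q) :
    ∃ N : ℕ, ∀ {V : Type u} [Fintype V] {G : SimpleGraph V}, N ≤ Fintype.card V → H.Free G →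
      ¬ G.Colorable (Fintype.card ι) →
      specRadius G < specRadius (turanGraph (Fintype.card V) (Fintype.card ι)) := by
  have hk : 0 < Fintype.card ι := Fintype.card_pos_iff.2 ⟨C p⟩
  obtain ⟨e, he, N₁, hN₁⟩ := exists_le_specRadius_deleteVertex_of_free.{u} C hpq hC
  obtain ⟨N₂, hN₂⟩ := exists_specRadius_le_of_free.{u} C hpq hC
  generalize Fintype.card ι = k at *
  obtain ⟨N₃, hN₃⟩ := exists_nat_gt ((k ^ 2 + 2) / min e (e ^ 2 / 2))
  refine ⟨max (max N₁ (N₂ + 1)) (max N₃ 1), fun {V _ G} hcard hG hcol => ?_⟩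
  by_contra! hle
  have hturan := le_specRadius_turanGraph_mul hk (Fintype.card V)
  have hn₁ : (1 : ℝ) ≤ Fintype.card V := by exact_mod_cast (by omega : 1 ≤ Fintype.card V)
  have hn₃ : (N₃ : ℝ) ≤ Fintype.card V := by exact_mod_cast (by omega : N₃ ≤ Fintype.card V)
  set n : ℝ := (Fintype.card V : ℝ) with hn
  have hn₀ : 0 < n := by linarith
  set r : ℝ := (k ^ 2 + 2) / n
  have hr : r < min e (e ^ 2 / 2) :=
    (div_lt_comm₀ hn₀ (by positivity)).2 (hN₃.trans_le hn₃)
  have hlower : (1 - 1 / k) * n - r ≤ specRadius G := by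
    refine hle.trans' (le_of_mul_le_mul_right (hturan.trans' (le_of_eq ?_)) hn₀)
    rw [sub_mul, div_mul_cancel₀ _ hn₀.ne']
    ring
  obtain ⟨u, hu⟩ := hN₁ (by omega) hG hcol <| by
    nlinarith [hr.trans_le (min_le_left _ _)]
  have hcard' := card_subtype_ne u
  have hupper := hN₂ (by omega) (free_deleteVertex hG u)
  rw [← hcard', Nat.cast_add_one] at hn
  have hloss : (1 - 1 / k) * (n - 1) - r ≤ specRadius G / n * (n - 1) := by
    rw [div_mul_eq_mul_div, le_div_iff₀ hn₀]
    have hr₀ : 0 ≤ r := by positivity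
    nlinarith [mul_le_mul_of_nonneg_right hlower (sub_nonneg.2 hn₁)]
  rw [eq_sub_of_add_eq hn.symm] at hupper
  linarith [hr.trans_le (min_le_right _ _)]

end Extremal

/-! ### Colour-critical edges -/

section Critical

theorem contains_iff_isContained {α β : Type*} {G : SimpleGraph α} {H : SimpleGraph β} :
    Contains G H ↔ H ⊑ G :=
  ⟨fun ⟨f, hf⟩ => ⟨⟨f, hf _ _⟩, f.injective⟩,
    fun ⟨f⟩ => ⟨f.toEmbedding, fun _ _ => f.toHom.map_adj⟩⟩

theorem adjSpectralRadius_eq_specRadius {n : ℕ} (G : SimpleGraph (Fin n)) :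
    adjSpectralRadius G = specRadius G := by
  unfold adjSpectralRadius specRadius
  congr!

theorem apply_eq_of_coloring_deleteEdges {α ι : Type*} {H : SimpleGraph α} {p q : α}
    (C : (H.deleteEdges {s(p, q)}).Coloring ι) (hH : IsEmpty (H.Coloring ι)) : C p = C q := by
  by_contra hne
  refine hH.elim (Coloring.mk C fun {a b} hab => ?_)
  by_cases hedge : s(a, b) = s(p, q)
  · obtain ⟨rfl, rfl⟩ | ⟨rfl, rfl⟩ := Sym2.eq_iff.1 hedge
    · exact hne
    · exact Ne.symm hne
  · exact C.valid (deleteEdges_adj.2 ⟨hab, hedge⟩)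

end Critical

end SpectralTuran

/-- Spectral chromatic critical edge theorem (Nikiforov / Theorem 1.2):
if `H` has chromatic number `k+1` and a color critical edge, then for all large `n`
the Turán graph `T_{n,k}` is the unique spectral extremal `H`-free graph. -/
theorem stmt0 {V : Type*} [Fintype V] (H : SimpleGraph V) (k : ℕ) (hk : 1 ≤ k)
    (hchrom : H.chromaticNumber = (k + 1 : ℕ))
    (hcrit : ∃ e ∈ H.edgeSet, (H.deleteEdges {e}).chromaticNumber = (k : ℕ)) :
    ∃ n₀ : ℕ, ∀ n : ℕ, n₀ ≤ n → ∀ G : SimpleGraph (Fin n), ¬ Contains G H →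
      adjSpectralRadius G ≤ adjSpectralRadius (turanGraph n k) ∧
      (adjSpectralRadius G = adjSpectralRadius (turanGraph n k) ↔
        Nonempty (G ≃g turanGraph n k)) := by
  obtain ⟨e, he, hchi⟩ := hcrit
  induction e with | h p q
  obtain ⟨C⟩ : (H.deleteEdges {s(p, q)}).Colorable k := chromaticNumber_le_iff_colorable.1 hchi.le
  have hcol : IsEmpty (H.Coloring (Fin k)) := by
    rw [← not_nonempty_iff, ← Colorable, ← chromaticNumber_le_iff_colorable, hchrom, Nat.cast_le]
    omega
  obtain ⟨N, hN⟩ := SpectralTuran.exists_specRadius_lt_turanGraph.{0} C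
    (H.ne_of_adj he) (SpectralTuran.apply_eq_of_coloring_deleteEdges C hcol)
  simp only [Fintype.card_fin] at hN
  refine ⟨N, fun n hn G hG => ?_⟩
  rw [SpectralTuran.contains_iff_isContained] at hG
  simp only [SpectralTuran.adjSpectralRadius_eq_specRadius]
  have hiso : Nonempty (G ≃g turanGraph n k) →
      SpectralTuran.specRadius G = SpectralTuran.specRadius (turanGraph n k) :=
    fun ⟨φ⟩ => SpectralTuran.specRadius_congr φ
  by_cases hGk : G.Colorable k
  · exact ⟨SpectralTuran.specRadius_le_turanGraph hk hGk,
      SpectralTuran.nonempty_iso_turanGraph_of_specRadius_eq hk hGk, hiso⟩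
  · have hlt : SpectralTuran.specRadius G < SpectralTuran.specRadius (turanGraph n k) := by
      have h := hN (G := G) (by simpa using hn) hG hGk
      rwa [Fintype.card_fin] at h
    exact ⟨hlt.le, fun h => absurd h hlt.ne, hiso⟩
end

section
/- Let r ≥ 1 and let n be an integer with n ≥ (13/2)r (i.e., 2n ≥ 13r). If G is a B_{r+1}-free graph on n vertices, then ρ(G) ≤ ρ(T_{n,2}), with equality if and only if G is isomorphic to the Turán graph T_{n,2}. -/
open SimpleGraph Finset

attribute [local instance] Classical.propDecidable

/-! Suppose `ρ = ρ(G) ≥ ρ(T_{n,2})`, let `x` be an eigenvector for `ρ` with largest entry `x u = 1`,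
and put `A = N(u)`, so that `ρ ≤ |A|`. Applying the adjacency matrix three times at `u` bounds `ρ³`
by degree sums over `A`. Each edge inside `A` lies in at most `r` triangles, so its two ends have at
most `|Aᶜ| + r` neighbours in `Aᶜ` altogether, and each vertex of `A` has at most `r` neighbours
in `A`. If `A` spanned an edge, these bounds would contradict a cubic inequality that holds as soon
as `2n ≥ 13r`; hence `A` is independent. Now `ρ² ≤ e(A, Aᶜ) ≤ |A||Aᶜ| ≤ e(T_{n,2}) ≤ ρ²`, so `A` is
completely joined to `Aᶜ`, and an edge inside `Aᶜ` would lie in `|A| ≥ ρ > r` triangles. Therefore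
`G` is bipartite with `e(T_{n,2})` edges, and the uniqueness in Turán's theorem gives
`G ≅ T_{n,2}`. -/

section Book

variable {V : Type*} [Fintype V] {G : SimpleGraph V} {r : ℕ} {u v : V}

lemma contains_book (huv : G.Adj u v) (hr : r ≤ #(G.neighborFinset u ∩ G.neighborFinset v)) :
    Contains G (book r) := by
  obtain ⟨page⟩ : Nonempty (Fin r ↪ ↥(G.neighborFinset u ∩ G.neighborFinset v)) :=
    Function.Embedding.nonempty_of_card_le (by rwa [Fintype.card_fin, Fintype.card_coe])
  have adj_page (i : Fin 2) (j : Fin r) : G.Adj (![u, v] i) (page j) := by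
    have hj : G.Adj u (page j) ∧ G.Adj v (page j) := by
      simpa only [mem_inter, mem_neighborFinset] using (page j).2
    fin_cases i
    exacts [hj.1, hj.2]
  have spine_injective : Function.Injective ![u, v] := by
    rw [Function.Injective, Fin.forall_fin_two]
    simp [Fin.forall_fin_two, huv.ne, huv.ne']
  refine ⟨⟨Sum.elim ![u, v] (fun j => (page j : V)), spine_injective.sumElim
    (Subtype.val_injective.comp page.injective) fun i j => (adj_page i j).ne⟩, ?_⟩
  rintro (i | i) (j | j) hij
  · fin_cases i <;> fin_cases j <;> simp_all [book, huv.symm]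
  · exact adj_page i j
  · exact (adj_page j i).symm
  · simp [book] at hij

/-- The booksize of `G` is at most `r`: every edge of `G` lies in at most `r` triangles. -/
def BookSizeLE (G : SimpleGraph V) (r : ℕ) : Prop :=
  ∀ ⦃u v⦄, G.Adj u v → #(G.neighborFinset u ∩ G.neighborFinset v) ≤ r

lemma bookSizeLE_of_not_contains_book (h : ¬ Contains G (book (r + 1))) : BookSizeLE G r :=
  fun _ _ huv => Nat.lt_succ_iff.1 <| not_le.1 fun hle => h (contains_book huv hle)

end Book

section DegreeIn

variable {V : Type*} [Fintype V] {G : SimpleGraph V} {r : ℕ} {s t : Finset V} {u v w : V}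

/-- The number `d_s(v)` of neighbours of `v` in the vertex subset `s`; here `v` may lie outside
of `s`. -/
noncomputable def degreeIn (G : SimpleGraph V) (s : Finset V) (v : V) : ℕ :=
  #(G.neighborFinset v ∩ s)

lemma degreeIn_le_card : degreeIn G s v ≤ #s :=
  card_le_card inter_subset_right

lemma degreeIn_add_degreeIn_compl : degreeIn G s v + degreeIn G sᶜ v = G.degree v := by
  rw [degreeIn, degreeIn, ← sdiff_eq_inter_compl, card_inter_add_card_sdiff,
    card_neighborFinset_eq_degree]

lemma sum_sum_neighborFinset_inter (f : V → ℝ) :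
    ∑ v ∈ s, ∑ w ∈ G.neighborFinset v ∩ t, f w = ∑ w ∈ t, degreeIn G s w * f w := by
  rw [sum_comm' (t' := t) (s' := fun w => G.neighborFinset w ∩ s)]
  · simp only [sum_const, nsmul_eq_mul, degreeIn]
  · intro v w
    simp only [mem_inter, mem_neighborFinset, G.adj_comm w v]
    tauto

lemma not_adj_of_sum_degreeIn_eq_zero (h : ∑ v ∈ s, degreeIn G s v = 0) (hv : v ∈ s)
    (hw : w ∈ s) : ¬ G.Adj v w := by
  have hempty : G.neighborFinset v ∩ s = ∅ := card_eq_zero.1 (sum_eq_zero_iff.1 h v hv)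
  intro hvw
  exact notMem_empty w (hempty ▸ mem_inter.2 ⟨(G.mem_neighborFinset v w).2 hvw, hw⟩)

namespace BookSizeLE

variable (hG : BookSizeLE G r)
include hG

lemma degreeIn_neighborFinset_le (huv : v ∈ G.neighborFinset u) :
    degreeIn G (G.neighborFinset u) v ≤ r :=
  hG ((G.mem_neighborFinset u v).1 huv).symm

lemma degreeIn_add_degreeIn_le (hvw : G.Adj v w) :
    degreeIn G t v + degreeIn G t w ≤ #t + r := by
  set N := G.neighborFinset
  calc degreeIn G t v + degreeIn G t w
      = #((N v ∩ t) ∪ (N w ∩ t)) + #((N v ∩ t) ∩ (N w ∩ t)) := (card_union_add_card_inter _ _).symm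
    _ ≤ #t + #(N v ∩ N w) := by
        gcongr
        · exact union_subset inter_subset_right inter_subset_right
        · exact inter_subset_left
        · exact inter_subset_left
    _ ≤ #t + r := by grw [hG hvw]

lemma two_mul_sum_degreeIn_mul_degreeIn_le :
    2 * ∑ v ∈ s, (degreeIn G s v * degreeIn G t v : ℝ) ≤
      (#t + r) * ∑ v ∈ s, (degreeIn G s v : ℝ) := by
  calc 2 * ∑ v ∈ s, (degreeIn G s v * degreeIn G t v : ℝ)
      = ∑ v ∈ s, ∑ w ∈ G.neighborFinset v ∩ s, (degreeIn G t v + degreeIn G t w : ℝ) := by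
        simp only [sum_add_distrib, sum_sum_neighborFinset_inter, sum_const, nsmul_eq_mul,
          two_mul, degreeIn]
    _ ≤ ∑ v ∈ s, ∑ _w ∈ G.neighborFinset v ∩ s, (#t + r : ℝ) := by
        refine sum_le_sum fun v _ => sum_le_sum fun w hw => ?_
        have hvw : G.Adj v w := (G.mem_neighborFinset v w).1 (mem_inter.1 hw).1
        exact_mod_cast hG.degreeIn_add_degreeIn_le hvw
    _ = (#t + r) * ∑ v ∈ s, (degreeIn G s v : ℝ) := by
        simp only [sum_const, nsmul_eq_mul, mul_comm _ (#t + r : ℝ), mul_sum, degreeIn]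

lemma card_mul_sum_degreeIn_sub_le :
    #t * ∑ v ∈ G.neighborFinset u, (degreeIn G (G.neighborFinset u) v : ℝ) -
        ∑ v ∈ G.neighborFinset u, (degreeIn G (G.neighborFinset u) v * degreeIn G t v : ℝ) ≤
      r * (#(G.neighborFinset u) * #t - ∑ v ∈ G.neighborFinset u, (degreeIn G t v : ℝ)) := by
  set A := G.neighborFinset u
  calc #t * ∑ v ∈ A, (degreeIn G A v : ℝ) - ∑ v ∈ A, (degreeIn G A v * degreeIn G t v : ℝ)
      = ∑ v ∈ A, (degreeIn G A v : ℝ) * (#t - degreeIn G t v) := by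
        simp only [mul_sub, sum_sub_distrib, sum_mul, mul_comm (#t : ℝ)]
    _ ≤ ∑ v ∈ A, (r : ℝ) * (#t - degreeIn G t v) := by
        refine sum_le_sum fun v hv => mul_le_mul_of_nonneg_right ?_ (sub_nonneg.2 ?_)
        · exact_mod_cast hG.degreeIn_neighborFinset_le hv
        · exact_mod_cast degreeIn_le_card
    _ = r * (#A * #t - ∑ v ∈ A, (degreeIn G t v : ℝ)) := by
        rw [← mul_sum, sum_sub_distrib, sum_const, nsmul_eq_mul]

end BookSizeLE

end DegreeIn

section Spectrum

variable {V : Type*} [Fintype V] {G : SimpleGraph V} {r : ℕ} {u : V}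

lemma mem_spectrum_adjMatrix_iff [DecidableEq V] {μ : ℝ} :
    μ ∈ spectrum ℝ (G.adjMatrix ℝ) ↔
      ∃ x : V → ℝ, x ≠ 0 ∧ ∀ v, μ * x v = ∑ w ∈ G.neighborFinset v, x w := by
  rw [← Matrix.spectrum_toLin', ← Module.End.hasEigenvalue_iff_mem_spectrum,
    Module.End.hasEigenvalue_iff, Submodule.ne_bot_iff]
  refine exists_congr fun x => ?_
  rw [Module.End.mem_eigenspace_iff, Matrix.toLin'_apply, and_comm, funext_iff]
  simp only [adjMatrix_mulVec_apply, Pi.smul_apply, smul_eq_mul, eq_comm]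

lemma spectrum_adjMatrix_congr [DecidableEq V] {W : Type*} [Fintype W] [DecidableEq W]
    {H : SimpleGraph W} (e : G ≃g H) :
    spectrum ℝ (G.adjMatrix ℝ) = spectrum ℝ (H.adjMatrix ℝ) := by
  rw [← e.reindex_adjMatrix ℝ]
  exact (AlgEquiv.spectrum_eq (Matrix.reindexAlgEquiv ℝ ℝ e.toEquiv) _).symm

lemma adjSpectralRadius_congr {n : ℕ} {G H : SimpleGraph (Fin n)} (e : G ≃g H) :
    adjSpectralRadius G = adjSpectralRadius H := by
  rw [adjSpectralRadius, adjSpectralRadius, spectrum_adjMatrix_congr e]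

lemma le_adjSpectralRadius {n : ℕ} {G : SimpleGraph (Fin n)} {μ : ℝ}
    (hμ : μ ∈ spectrum ℝ (G.adjMatrix ℝ)) : μ ≤ adjSpectralRadius G :=
  le_csSup Matrix.finite_real_spectrum.bddAbove hμ

lemma adjSpectralRadius_mem_spectrum {n : ℕ} [NeZero n] (G : SimpleGraph (Fin n)) :
    adjSpectralRadius G ∈ spectrum ℝ (G.adjMatrix ℝ) := by
  have hspec : (spectrum ℝ (G.adjMatrix ℝ)).Nonempty :=
    ⟨_, (G.isHermitian_adjMatrix ℝ).eigenvalues_mem_spectrum_real 0⟩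
  exact hspec.csSup_mem Matrix.finite_real_spectrum

/-- `x` is an eigenvector of the adjacency matrix of `G` for the eigenvalue `ρ`, scaled so that its
largest entry is the entry `1` at `u`. Entries of `x` may be negative. -/
structure IsNormalizedEigenvector (G : SimpleGraph V) (ρ : ℝ) (x : V → ℝ) (u : V) : Prop where
  mul_apply (v : V) : ρ * x v = ∑ w ∈ G.neighborFinset v, x w
  apply_le_one (v : V) : x v ≤ 1
  apply_eq_one : x u = 1

lemma exists_isNormalizedEigenvector [DecidableEq V] {ρ : ℝ}
    (hρ : ρ ∈ spectrum ℝ (G.adjMatrix ℝ)) :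
    ∃ x u, IsNormalizedEigenvector G ρ x u := by
  obtain ⟨y, hy, hρy⟩ := mem_spectrum_adjMatrix_iff.1 hρ
  obtain ⟨v₀, hv₀⟩ := Function.ne_iff.1 hy
  have : Nonempty V := ⟨v₀⟩
  obtain ⟨u, hu⟩ := Finite.exists_max fun v => |y v|
  have hyu : 0 < |y u| := (abs_pos.2 hv₀).trans_le (hu v₀)
  refine ⟨fun v => y v / y u, u, fun v => ?_, fun v => ?_, div_self (abs_pos.1 hyu)⟩
  · rw [← mul_div_assoc, hρy, sum_div]
  · exact (le_abs_self _).trans (abs_div (y v) (y u) ▸ (div_le_one hyu).2 (hu v))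

namespace IsNormalizedEigenvector

variable {ρ : ℝ} {x : V → ℝ} (hx : IsNormalizedEigenvector G ρ x u)
include hx

lemma sum_apply_le_card (s : Finset V) : ∑ v ∈ s, x v ≤ #s := by
  simpa using sum_le_sum fun v (_ : v ∈ s) => hx.apply_le_one v

lemma sum_neighborFinset_eq : ∑ v ∈ G.neighborFinset u, x v = ρ := by
  rw [← hx.mul_apply, hx.apply_eq_one, mul_one]

lemma le_card_neighborFinset : ρ ≤ #(G.neighborFinset u) :=
  hx.sum_neighborFinset_eq ▸ hx.sum_apply_le_card _

lemma mul_apply_le_sum_add_degreeIn (s : Finset V) (v : V) :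
    ρ * x v ≤ ∑ w ∈ G.neighborFinset v ∩ s, x w + degreeIn G sᶜ v := by
  rw [hx.mul_apply, ← sum_inter_add_sum_sdiff (G.neighborFinset v) s, sdiff_eq_inter_compl]
  gcongr
  exact hx.sum_apply_le_card _

lemma mul_apply_le_degreeIn_add_degreeIn (s : Finset V) (v : V) :
    ρ * x v ≤ degreeIn G s v + degreeIn G sᶜ v := by
  grw [hx.mul_apply_le_sum_add_degreeIn s v, hx.sum_apply_le_card, ← degreeIn]

lemma sq_le_sum_degreeIn :
    ρ ^ 2 ≤ ∑ v ∈ G.neighborFinset u, degreeIn G (G.neighborFinset u) v * x v +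
      ∑ v ∈ G.neighborFinset u, (degreeIn G (G.neighborFinset u)ᶜ v : ℝ) := by
  set A := G.neighborFinset u
  calc ρ ^ 2 = ∑ v ∈ A, ρ * x v := by rw [← mul_sum, hx.sum_neighborFinset_eq, sq]
    _ ≤ ∑ v ∈ A, (∑ w ∈ G.neighborFinset v ∩ A, x w + degreeIn G Aᶜ v) := by
        gcongr with v
        exact hx.mul_apply_le_sum_add_degreeIn A v
    _ = _ := by rw [sum_add_distrib, sum_sum_neighborFinset_inter]

lemma sq_le_sum_degreeIn_compl
    (hD : ∑ v ∈ G.neighborFinset u, degreeIn G (G.neighborFinset u) v = 0) :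
    ρ ^ 2 ≤ ∑ v ∈ G.neighborFinset u, (degreeIn G (G.neighborFinset u)ᶜ v : ℝ) := by
  refine hx.sq_le_sum_degreeIn.trans_eq (add_eq_right.2 (sum_eq_zero fun v hv => ?_))
  rw [sum_eq_zero_iff.1 hD v hv, Nat.cast_zero, zero_mul]

lemma cube_le_sum_degreeIn (hG : BookSizeLE G r) (hρ : 0 ≤ ρ) :
    ρ ^ 3 ≤ r * ∑ v ∈ G.neighborFinset u, (degreeIn G (G.neighborFinset u) v : ℝ) +
      ∑ v ∈ G.neighborFinset u,
        (degreeIn G (G.neighborFinset u) v * degreeIn G (G.neighborFinset u)ᶜ v : ℝ) +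
      ρ * ∑ v ∈ G.neighborFinset u, (degreeIn G (G.neighborFinset u)ᶜ v : ℝ) := by
  set A := G.neighborFinset u
  have hentry (v) (hv : v ∈ A) : ρ * x v ≤ r + degreeIn G Aᶜ v := by
    grw [hx.mul_apply_le_degreeIn_add_degreeIn A v, hG.degreeIn_neighborFinset_le hv]
  calc ρ ^ 3 = ρ * ρ ^ 2 := by ring
    _ ≤ ρ * (∑ v ∈ A, degreeIn G A v * x v + ∑ v ∈ A, (degreeIn G Aᶜ v : ℝ)) := by
        gcongr
        exact hx.sq_le_sum_degreeIn
    _ = ∑ v ∈ A, degreeIn G A v * (ρ * x v) + ρ * ∑ v ∈ A, (degreeIn G Aᶜ v : ℝ) := by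
        simp only [mul_add, mul_sum, mul_left_comm ρ]
    _ ≤ ∑ v ∈ A, degreeIn G A v * (r + degreeIn G Aᶜ v : ℝ) +
          ρ * ∑ v ∈ A, (degreeIn G Aᶜ v : ℝ) := by
        gcongr with v hv
        exact hentry v hv
    _ = _ := by simp only [mul_add, sum_add_distrib, sum_mul, mul_comm (r : ℝ)]

lemma two_mul_mul_sq_sub_card_mul_card_le (hG : BookSizeLE G r) (hρ : 0 ≤ ρ) :
    2 * (r * ρ * (ρ ^ 2 - #(G.neighborFinset u) * #(G.neighborFinset u)ᶜ)) ≤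
      (∑ v ∈ G.neighborFinset u, (degreeIn G (G.neighborFinset u) v : ℝ)) *
        (3 * r ^ 2 + r * #(G.neighborFinset u)ᶜ + ρ * r - ρ * #(G.neighborFinset u)ᶜ) := by
  -- With the weights `r`, `ρ` and `r + ρ` all sums other than `∑ d_A` cancel.
  have hcube := mul_le_mul_of_nonneg_left (hx.cube_le_sum_degreeIn hG hρ)
    (Nat.cast_nonneg (α := ℝ) r)
  have hedges := mul_le_mul_of_nonneg_left
    (hG.card_mul_sum_degreeIn_sub_le (u := u) (t := (G.neighborFinset u)ᶜ)) hρ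
  have hpairs := mul_le_mul_of_nonneg_left
    (hG.two_mul_sum_degreeIn_mul_degreeIn_le (s := G.neighborFinset u)
      (t := (G.neighborFinset u)ᶜ)) (by positivity : 0 ≤ r + ρ)
  linarith

lemma sum_degreeIn_neighborFinset_eq_zero (hG : BookSizeLE G r) (hρ : 0 ≤ ρ)
    (hsq : #(G.neighborFinset u) * #(G.neighborFinset u)ᶜ ≤ ρ ^ 2)
    (hcubic : #(G.neighborFinset u) * r * (3 * r + #(G.neighborFinset u)ᶜ) <
      ρ * (2 * ρ ^ 2 - #(G.neighborFinset u) * #(G.neighborFinset u)ᶜ -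
        #(G.neighborFinset u) * r)) :
    ∑ v ∈ G.neighborFinset u, degreeIn G (G.neighborFinset u) v = 0 := by
  have hmain := hx.two_mul_mul_sq_sub_card_mul_card_le hG hρ
  set A := G.neighborFinset u
  set D := ∑ v ∈ A, (degreeIn G A v : ℝ) with hD
  by_contra hne
  have hDpos : 0 < D := by
    rw [hD]
    exact_mod_cast Nat.pos_of_ne_zero hne
  have hDle : D ≤ r * #A := by
    calc D ≤ ∑ _v ∈ A, (r : ℝ) := sum_le_sum fun v hv => by
          exact_mod_cast hG.degreeIn_neighborFinset_le hv
      _ = r * #A := by rw [sum_const, nsmul_eq_mul, mul_comm]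
  have hr : (0 : ℝ) < r := pos_of_mul_pos_left (hDpos.trans_le hDle) (Nat.cast_nonneg _)
  have hfactor : 0 ≤ 3 * r ^ 2 + r * #Aᶜ + ρ * r - ρ * (#Aᶜ : ℝ) := by
    refine nonneg_of_mul_nonneg_right (le_trans ?_ hmain) hDpos
    have := sub_nonneg.2 hsq
    positivity
  have hupper := mul_le_mul_of_nonneg_right hDle hfactor
  have hlower := mul_lt_mul_of_pos_left hcubic hr
  linarith

lemma isBipartiteWith_neighborFinset (hG : BookSizeLE G r) (hrρ : r < ρ)
    (hD : ∑ v ∈ G.neighborFinset u, degreeIn G (G.neighborFinset u) v = 0)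
    (hcard : #(G.neighborFinset u) * #(G.neighborFinset u)ᶜ ≤
      ∑ v ∈ G.neighborFinset u, degreeIn G (G.neighborFinset u)ᶜ v) :
    G.IsBipartiteWith (G.neighborFinset u) ↑(G.neighborFinset u)ᶜ := by
  have hle := hx.le_card_neighborFinset
  set A := G.neighborFinset u
  have hcomplete : ∀ v ∈ A, Aᶜ ⊆ G.neighborFinset v := by
    have hsum : ∑ v ∈ A, degreeIn G Aᶜ v = ∑ _v ∈ A, #Aᶜ :=
      (sum_le_sum fun v _ => degreeIn_le_card).antisymm (by simpa using hcard)
    intro v hv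
    have hdeg : degreeIn G Aᶜ v = #Aᶜ :=
      (sum_eq_sum_iff_of_le fun v _ => degreeIn_le_card).1 hsum v hv
    exact inter_eq_right.1 (eq_of_subset_of_card_le inter_subset_right hdeg.ge)
  have hindep_compl (v) (hv : v ∉ A) (w) (hw : w ∉ A) : ¬ G.Adj v w := by
    intro hvw
    have hsub : A ⊆ G.neighborFinset v ∩ G.neighborFinset w := fun z hz => by
      have adj_of_notMem (y) (hy : y ∉ A) : z ∈ G.neighborFinset y :=
        (G.mem_neighborFinset y z).2
          ((G.mem_neighborFinset z y).1 (hcomplete z hz (mem_compl.2 hy))).symm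
      exact mem_inter.2 ⟨adj_of_notMem v hv, adj_of_notMem w hw⟩
    have hAr : (#A : ℝ) ≤ r := by exact_mod_cast (card_le_card hsub).trans (hG hvw)
    linarith
  refine ⟨disjoint_coe.2 disjoint_compl_right, fun v w hvw => ?_⟩
  have hindep (hv : v ∈ A) (hw : w ∈ A) := not_adj_of_sum_degreeIn_eq_zero hD hv hw
  have hindep' (hv : v ∉ A) (hw : w ∉ A) := hindep_compl v hv w hw
  simp only [coe_compl, Set.mem_compl_iff, mem_coe]
  tauto

end IsNormalizedEigenvector

end Spectrum

section Cubic

lemma cubic_lt_of_discrim_lt {ρ a b r s t : ℝ} (ha : 0 ≤ a) (hb : 0 ≤ b) (hab : 0 < a + b)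
    (hr : 0 ≤ r) (hs : 0 < s) (hrt : r ≤ t * (a + b)) (hsρ : s * (a + b) ≤ ρ)
    (hst : (t * (3 * t + 1) + s + s * t) ^ 2 < 8 * s ^ 3 * (s + t)) :
    a * r * (3 * r + b) < ρ * (2 * ρ ^ 2 - a * b - a * r) := by
  have hρ : 0 ≤ ρ := le_trans (by positivity) hsρ
  obtain ⟨n, rfl⟩ : ∃ n, b = n - a := ⟨a + b, by ring⟩
  rw [add_sub_cancel] at hab hrt hsρ
  have ht : 0 ≤ t := nonneg_of_mul_nonneg_left (hr.trans hrt) hab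
  have hscaled : a * (t * n) * (3 * (t * n) + (n - a)) <
      s * n * (2 * (s * n) ^ 2 - a * (n - a) - a * (t * n)) := by
    -- By `hst`, this quadratic in `a` has negative discriminant.
    have hquad : 0 < (s + t) * a ^ 2 - (t * (3 * t + 1) + s + s * t) * a * n +
        2 * s ^ 3 * n ^ 2 := by
      refine pos_of_mul_pos_right (a := 4 * (s + t)) ?_ (by positivity)
      have hdisc := mul_pos (sub_pos.2 hst) (pow_pos hab 2)
      linarith [sq_nonneg (2 * (s + t) * a - (t * (3 * t + 1) + s + s * t) * n)]
    linarith [mul_pos hab hquad]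
  have hinner : 0 ≤ 2 * (s * n) ^ 2 - a * (n - a) - a * (t * n) := by
    refine (pos_of_mul_pos_right (lt_of_le_of_lt ?_ hscaled) (by positivity)).le
    positivity
  calc a * r * (3 * r + (n - a)) ≤ a * (t * n) * (3 * (t * n) + (n - a)) := by gcongr
    _ < s * n * (2 * (s * n) ^ 2 - a * (n - a) - a * (t * n)) := hscaled
    _ ≤ ρ * (2 * ρ ^ 2 - a * (n - a) - a * r) := by gcongr

lemma cubic_lt_of_sq_le_four_mul_sq_add_one {ρ : ℝ} {a b r : ℕ} (hρ : 0 ≤ ρ) (hr : 1 ≤ r)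
    (hrn : 13 * r ≤ 2 * (a + b)) (hsq : ((a + b : ℕ) : ℝ) ^ 2 ≤ 4 * ρ ^ 2 + 1) :
    (a : ℝ) * r * (3 * r + b) < ρ * (2 * ρ ^ 2 - a * b - a * r) := by
  have hn : 7 ≤ a + b := by lia
  have hrn' : (13 * r : ℝ) ≤ 2 * (a + b) := by exact_mod_cast hrn
  push_cast at hsq
  -- In each range, `s` lies just below `√(1 - 1 / n ^ 2) / 2` for the least `n`.
  rcases lt_or_ge (a + b) 13 with hsmall | hlarge
  · obtain rfl : r = 1 := by lia
    have hn' : (7 : ℝ) ≤ a + b := by exact_mod_cast hn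
    refine cubic_lt_of_discrim_lt (s := 49 / 100) (t := 1 / 7) (by positivity) (by positivity)
      (by linarith) (by positivity) (by norm_num) (by push_cast; linarith) ?_ (by norm_num)
    exact le_of_sq_le_sq (by nlinarith) hρ
  · have hn' : (13 : ℝ) ≤ a + b := by exact_mod_cast hlarge
    refine cubic_lt_of_discrim_lt (s := 249 / 500) (t := 2 / 13) (by positivity) (by positivity)
      (by linarith) (by positivity) (by norm_num) (by linarith) ?_ (by norm_num)
    exact le_of_sq_le_sq (by nlinarith) hρ

lemma lt_of_sq_le_four_mul_sq_add_one {ρ : ℝ} {n r : ℕ} (hρ : 0 ≤ ρ) (hr : 1 ≤ r)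
    (hrn : 13 * r ≤ 2 * n) (hsq : (n : ℝ) ^ 2 ≤ 4 * ρ ^ 2 + 1) : r < ρ := by
  have hr' : (1 : ℝ) ≤ r := by exact_mod_cast hr
  have hrn' : (13 * r : ℝ) ≤ 2 * n := by exact_mod_cast hrn
  refine lt_of_pow_lt_pow_left₀ 2 hρ ?_
  nlinarith

end Cubic

section Turan

variable {V : Type*} [Fintype V] {G : SimpleGraph V} {s t : Finset V} {n r : ℕ} {v : V}

lemma card_edgeFinset_turanGraph_two (n : ℕ) : #(turanGraph n 2).edgeFinset = n ^ 2 / 4 := by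
  have hcard : #(turanGraph n 2).edgeFinset = (n ^ 2 - (n % 2) ^ 2) / 4 + (n % 2).choose 2 := by
    convert card_edgeFinset_turanGraph (r := 2) using 3
    rw [Nat.add_one_sub_one, mul_one]
  rw [hcard]
  obtain ⟨k, rfl | rfl⟩ := Nat.even_or_odd' n
  · simp
  · rw [Nat.mul_add_mod_self_left, show (2 * k + 1) ^ 2 = 4 * (k ^ 2 + k) + 1 by ring]
    rw [Nat.one_mod, one_pow, Nat.choose_eq_zero_of_lt one_lt_two]
    lia

lemma mul_le_card_edgeFinset_turanGraph_two (a b : ℕ) :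
    a * b ≤ #(turanGraph (a + b) 2).edgeFinset := by
  rw [card_edgeFinset_turanGraph_two, Nat.le_div_iff_mul_le four_pos, mul_comm, ← mul_assoc]
  exact four_mul_le_sq_add a b

lemma sq_le_four_mul_card_edgeFinset_turanGraph_two_add_one (n : ℕ) :
    n ^ 2 ≤ 4 * #(turanGraph n 2).edgeFinset + 1 := by
  have hmod : n ^ 2 % 4 ≤ 1 := by
    have hlt : n % 4 < 4 := Nat.mod_lt n four_pos
    rw [Nat.pow_mod]
    interval_cases n % 4 <;> decide
  rw [card_edgeFinset_turanGraph_two]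
  lia

lemma nonempty_iso_turanGraph_of_card_edgeFinset_le (hr : 0 < r) (hV : Fintype.card V = n)
    (hG : G.CliqueFree (r + 1)) (hcard : #(turanGraph n r).edgeFinset ≤ #G.edgeFinset) :
    Nonempty (G ≃g turanGraph n r) := by
  subst hV
  refine (isTuranMaximal_iff_nonempty_iso_turanGraph hr).1 ⟨hG, fun H _ hH => ?_⟩
  refine hH.card_edgeFinset_le.trans ?_
  rw [← card_edgeFinset_turanGraph]
  convert hcard

lemma neighborFinset_eq_of_isCompleteBetween (hst : G.IsBipartiteWith s t)
    (hcomplete : G.IsCompleteBetween s t) (hv : v ∈ s) : G.neighborFinset v = t := by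
  rw [isBipartiteWith_neighborFinset hst hv, filter_true_of_mem fun w hw => hcomplete hv hw]

lemma card_edgeFinset_eq_mul_of_isCompleteBetween (hst : G.IsBipartiteWith s t)
    (hcomplete : G.IsCompleteBetween s t) : #G.edgeFinset = #s * #t := by
  rw [← isBipartiteWith_sum_degrees_eq_card_edges hst]
  refine sum_const_nat fun v hv => ?_
  rw [← card_neighborFinset_eq_degree, neighborFinset_eq_of_isCompleteBetween hst hcomplete hv]

lemma sqrt_card_edgeFinset_mem_spectrum_adjMatrix [DecidableEq V] (hst : G.IsBipartiteWith s t)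
    (hcomplete : G.IsCompleteBetween s t) (hs : s.Nonempty) (ht : t.Nonempty) :
    √(#G.edgeFinset) ∈ spectrum ℝ (G.adjMatrix ℝ) := by
  have notMem_of_mem {v} (hv : v ∈ t) : v ∉ s := disjoint_right.1 (disjoint_coe.1 hst.disjoint) hv
  rw [card_edgeFinset_eq_mul_of_isCompleteBetween hst hcomplete, Nat.cast_mul,
    Real.sqrt_mul (Nat.cast_nonneg _)]
  set x : V → ℝ := fun v => if v ∈ s then √(#t) else if v ∈ t then √(#s) else 0
  have apply_of_mem_left {v} (hv : v ∈ s) : x v = √(#t) := if_pos hv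
  have apply_of_mem_right {v} (hv : v ∈ t) : x v = √(#s) :=
    (if_neg (notMem_of_mem hv)).trans (if_pos hv)
  refine mem_spectrum_adjMatrix_iff.2 ⟨x, ?_, fun v => ?_⟩
  · obtain ⟨v, hv⟩ := hs
    refine Function.ne_iff.2 ⟨v, ?_⟩
    simp [apply_of_mem_left hv, ht.ne_empty]
  by_cases hvs : v ∈ s
  · rw [neighborFinset_eq_of_isCompleteBetween hst hcomplete hvs, apply_of_mem_left hvs,
      sum_congr rfl fun w hw => apply_of_mem_right hw, sum_const, nsmul_eq_mul,
      mul_assoc, Real.mul_self_sqrt (Nat.cast_nonneg _), mul_comm]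
  by_cases hvt : v ∈ t
  · rw [neighborFinset_eq_of_isCompleteBetween hst.symm hcomplete.symm hvt, apply_of_mem_right hvt,
      sum_congr rfl fun w hw => apply_of_mem_left hw, sum_const, nsmul_eq_mul,
      mul_right_comm, Real.mul_self_sqrt (Nat.cast_nonneg _)]
  · have hempty : G.neighborFinset v = ∅ := by
      refine eq_empty_of_forall_notMem fun w hw => ?_
      rcases hst.mem_of_adj ((G.mem_neighborFinset v w).1 hw) with ⟨h, -⟩ | ⟨h, -⟩
      exacts [hvs h, hvt h]
    have hx : x v = 0 := (if_neg hvs).trans (if_neg hvt)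
    rw [hempty, hx, mul_zero, sum_empty]

lemma sqrt_card_edgeFinset_turanGraph_two_le_adjSpectralRadius (hn : 2 ≤ n) :
    √(#(turanGraph n 2).edgeFinset) ≤ adjSpectralRadius (turanGraph n 2) := by
  let evens : Finset (Fin n) := {v | (v : ℕ) % 2 = 0}
  let odds : Finset (Fin n) := {v | (v : ℕ) % 2 = 1}
  have mem_evens {v} : v ∈ evens ↔ (v : ℕ) % 2 = 0 := mem_filter_univ v
  have mem_odds {v} : v ∈ odds ↔ (v : ℕ) % 2 = 1 := mem_filter_univ v
  have hbipartite : (turanGraph n 2).IsBipartiteWith evens odds := by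
    refine ⟨disjoint_coe.2 (disjoint_left.2 fun v => ?_), fun v w hvw => ?_⟩
    · rw [mem_evens, mem_odds]
      lia
    · rw [turanGraph_adj] at hvw
      simp only [mem_coe, mem_evens, mem_odds]
      lia
  have hcomplete : (turanGraph n 2).IsCompleteBetween evens odds := fun v hv w hw => by
    rw [turanGraph_adj, mem_evens.1 hv, mem_odds.1 hw]
    exact zero_ne_one
  have hevens : evens.Nonempty := ⟨⟨0, by lia⟩, mem_evens.2 rfl⟩
  have hodds : odds.Nonempty := ⟨⟨1, by lia⟩, mem_odds.2 rfl⟩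
  convert le_adjSpectralRadius
    (sqrt_card_edgeFinset_mem_spectrum_adjMatrix hbipartite hcomplete hevens hodds)

end Turan

section Extremal

variable {V : Type*} [Fintype V] {G : SimpleGraph V} {n r : ℕ} {ρ : ℝ} {x : V → ℝ} {u : V}

lemma nonempty_iso_turanGraph_two_of_sqrt_le (hx : IsNormalizedEigenvector G ρ x u)
    (hG : BookSizeLE G r) (hr : 1 ≤ r) (hV : Fintype.card V = n) (hrn : 13 * r ≤ 2 * n)
    (hle : √(#(turanGraph n 2).edgeFinset) ≤ ρ) : Nonempty (G ≃g turanGraph n 2) := by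
  obtain ⟨hρ, hTuran⟩ := Real.sqrt_le_iff.1 hle
  have hsq : (n : ℝ) ^ 2 ≤ 4 * ρ ^ 2 + 1 := by
    grw [← hTuran]
    exact_mod_cast sq_le_four_mul_card_edgeFinset_turanGraph_two_add_one n
  have hrρ : r < ρ := lt_of_sq_le_four_mul_sq_add_one hρ hr hrn hsq
  obtain rfl : #(G.neighborFinset u) + #(G.neighborFinset u)ᶜ = n :=
    (card_add_card_compl _).trans hV
  have hprod := mul_le_card_edgeFinset_turanGraph_two #(G.neighborFinset u) #(G.neighborFinset u)ᶜ
  have hD := hx.sum_degreeIn_neighborFinset_eq_zero hG hρ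
    (hTuran.trans' (mod_cast hprod)) (cubic_lt_of_sq_le_four_mul_sq_add_one hρ hr hrn hsq)
  have hS := hTuran.trans (hx.sq_le_sum_degreeIn_compl hD)
  have hbipartite := hx.isBipartiteWith_neighborFinset hG hrρ hD (hprod.trans (mod_cast hS))
  refine nonempty_iso_turanGraph_of_card_edgeFinset_le two_pos hV
    (hbipartite.isBipartite.cliqueFree (Nat.lt_succ_self 2)) ?_
  rw [← isBipartiteWith_sum_degrees_eq_card_edges hbipartite]
  simp only [← degreeIn_add_degreeIn_compl (s := G.neighborFinset u), sum_add_distrib, hD, zero_add]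
  exact_mod_cast hS

lemma nonempty_iso_turanGraph_two {G : SimpleGraph (Fin n)} (hG : BookSizeLE G r)
    (hr : 1 ≤ r) (hrn : 13 * r ≤ 2 * n)
    (hle : adjSpectralRadius (turanGraph n 2) ≤ adjSpectralRadius G) :
    Nonempty (G ≃g turanGraph n 2) := by
  have : NeZero n := ⟨by lia⟩
  obtain ⟨x, u, hx⟩ := exists_isNormalizedEigenvector (adjSpectralRadius_mem_spectrum G)
  have hsqrt := sqrt_card_edgeFinset_turanGraph_two_le_adjSpectralRadius (n := n) (by lia)
  exact nonempty_iso_turanGraph_two_of_sqrt_le hx hG hr (Fintype.card_fin n) hrn (hsqrt.trans hle)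

end Extremal

/-- Theorem 1.4: for `n ≥ 13r/2`, the unique spectral extremal `B_{r+1}`-free graph
on `n` vertices is `T_{n,2}`. -/
theorem stmt1 (r n : ℕ) (hr : 1 ≤ r) (hn : 13 * r ≤ 2 * n)
    (G : SimpleGraph (Fin n)) (hfree : ¬ Contains G (book (r + 1))) :
    adjSpectralRadius G ≤ adjSpectralRadius (turanGraph n 2) ∧
    (adjSpectralRadius G = adjSpectralRadius (turanGraph n 2) ↔
      Nonempty (G ≃g turanGraph n 2)) := by
  have hG : BookSizeLE G r := bookSizeLE_of_not_contains_book hfree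
  have iso_of_le := nonempty_iso_turanGraph_two hG hr hn
  refine ⟨?_, fun h => iso_of_le h.ge, fun ⟨e⟩ => adjSpectralRadius_congr e⟩
  by_contra! hlt
  obtain ⟨e⟩ := iso_of_le hlt.le
  exact hlt.ne' (adjSpectralRadius_congr e)
end
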